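/- Let q > 3/2 and let 0 < κ₁ < κ₂ be real numbers. Then there exists a solution u to Δ²u + u^{−q} = 0 in ℝ³ with u > 0, such that u is not radially symmetric about any point, liminf_{|x|→∞} u(x)/|x|² = κ₁, limsup_{|x|→∞} u(x)/|x|² = κ₂, and moreover ∫_{ℝ³} u(x)^{−q} dx < +∞. -/

import Mathlib

open MeasureTheory Filter Topology Real

/-- The Laplacian of a function on ℝ³. -/
noncomputable def laplacian (u : EuclideanSpace ℝ (Fin 3) → ℝ) (x : EuclideanSpace ℝ (Fin 3)) : ℝ :=
  ∑ i : Fin 3, iteratedFDeriv ℝ 2 u x ![EuclideanSpace.single i 1, EuclideanSpace.single i 1]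

/-!
In dimension three `-‖x‖ / (8π)` is the fundamental solution of `Δ²`. Fix a quadratic form `B` whose
values on the unit sphere range exactly over `[κ₁, κ₂]`, and look for `u` with
`u x = N + B x x + (8π)⁻¹ ∫ (‖x - y‖ - ‖y‖) u(y)^(-q) dy`. The kernel is bounded by `‖x‖`, and since
`q > 3/2` the mass of `(N + B x x)^(-q)` is finite and tends to `0` as `N → ∞`; hence for large `N`
the right-hand side is a contraction for the sup norm weighted by `(1 + ‖x‖)⁻¹`, and its fixed point
differs from `N + B x x` by at most `‖x‖`. So `u` has the quadratic growth of `B`, which is not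
radial about any point.
-/

open Asymptotics Module
open scoped Convolution Gradient Laplacian NNReal

section Growth

variable {E F G : Type*} [NormedAddCommGroup E] [NormedSpace ℝ E]
  [NormedAddCommGroup F] [NormedSpace ℝ F] [NormedAddCommGroup G] [NormedSpace ℝ G]
  {k l : ℕ} {m m' : ℝ}

/-- `HasGrowth k m g`: the map `g` is `C^k` and its derivatives up to order `k` are all
`O((1 + ‖x‖) ^ m)`. In contrast with classical symbol classes no decay is gained by
differentiating. -/
def HasGrowth (k : ℕ) (m : ℝ) (g : E → F) : Prop :=
  ContDiff ℝ k g ∧ ∀ j ≤ k, iteratedFDeriv ℝ j g =O[⊤] fun x ↦ (1 + ‖x‖) ^ m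

namespace HasGrowth

variable {g h : E → F}

lemma zero_iff : HasGrowth 0 m g ↔ Continuous g ∧ g =O[⊤] fun x ↦ (1 + ‖x‖) ^ m := by
  have hnorm : iteratedFDeriv ℝ 0 g =O[⊤] (fun x ↦ (1 + ‖x‖) ^ m) ↔
      g =O[⊤] fun x ↦ (1 + ‖x‖) ^ m := by
    rw [← isBigO_norm_left]
    simp only [norm_iteratedFDeriv_zero, isBigO_norm_left]
  simp only [HasGrowth, CharP.cast_eq_zero, contDiff_zero, nonpos_iff_eq_zero, forall_eq, hnorm]

lemma succ_iff : HasGrowth (k + 1) m g ↔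
    HasGrowth 0 m g ∧ Differentiable ℝ g ∧ HasGrowth k m (fderiv ℝ g) := by
  have hnorm (j : ℕ) : iteratedFDeriv ℝ j (fderiv ℝ g) =O[⊤] (fun x ↦ (1 + ‖x‖) ^ m) ↔
      iteratedFDeriv ℝ (j + 1) g =O[⊤] fun x ↦ (1 + ‖x‖) ^ m := by
    rw [← isBigO_norm_left]
    simp only [norm_iteratedFDeriv_fderiv, isBigO_norm_left]
  have hsmooth : ContDiff ℝ (k + 1 : ℕ) g ↔ Differentiable ℝ g ∧ ContDiff ℝ k (fderiv ℝ g) := by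
    rw [Nat.cast_succ, contDiff_succ_iff_fderiv]
    simp
  simp only [HasGrowth, hsmooth, hnorm, CharP.cast_eq_zero, contDiff_zero, nonpos_iff_eq_zero,
    forall_eq]
  constructor
  · rintro ⟨⟨hd, hc⟩, hO⟩
    exact ⟨⟨hd.continuous, hO 0 (Nat.zero_le _)⟩, hd, hc, fun j hj ↦ hO (j + 1) (by lia)⟩
  · rintro ⟨⟨-, h0⟩, hd, hc, hO⟩
    refine ⟨⟨hd, hc⟩, fun j hj ↦ ?_⟩
    cases j with
    | zero => exact h0
    | succ j => exact hO j (by lia)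

lemma mono (hg : HasGrowth k m g) (hl : l ≤ k) (hm : m ≤ m') : HasGrowth l m' g := by
  refine ⟨hg.1.of_le (by exact_mod_cast hl), fun j hj ↦ (hg.2 j (hj.trans hl)).trans ?_⟩
  refine .of_norm_le fun x ↦ ?_
  rw [Real.norm_of_nonneg (by positivity)]
  exact rpow_le_rpow_of_exponent_le (by simp) hm

lemma continuous (hg : HasGrowth k m g) : Continuous g := hg.1.continuous

lemma isBigO (hg : HasGrowth k m g) : g =O[⊤] fun x ↦ (1 + ‖x‖) ^ m :=
  (zero_iff.1 (hg.mono k.zero_le le_rfl)).2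

lemma exists_norm_le (hg : HasGrowth k m g) : ∃ C, ∀ x, ‖g x‖ ≤ C * (1 + ‖x‖) ^ m := by
  obtain ⟨C, hC⟩ := isBigO_top.1 hg.isBigO
  refine ⟨C, fun x ↦ (hC x).trans_eq ?_⟩
  rw [Real.norm_of_nonneg (by positivity)]

lemma exists_norm_le_of_zero (hg : HasGrowth k 0 g) : ∃ M, ∀ x, ‖g x‖ ≤ M := by
  simpa only [rpow_zero, mul_one] using hg.exists_norm_le

lemma exists_norm_sub_le (hg : HasGrowth k m g) (hm : m ≤ 0) :
    ∃ C, ∀ x₀, ∀ x ∈ Metric.ball x₀ 1, ∀ t, ‖g (x - t)‖ ≤ C * (1 + ‖x₀ - t‖) ^ m := by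
  obtain ⟨C, hC⟩ := hg.exists_norm_le
  have hC0 : 0 ≤ C := by simpa using (norm_nonneg _).trans (hC 0)
  refine ⟨C * (2⁻¹ : ℝ) ^ m, fun x₀ x hx t ↦ (hC _).trans ?_⟩
  rw [mul_assoc, ← mul_rpow (by positivity) (by positivity)]
  have hnorm : ‖x₀ - t‖ ≤ ‖x - t‖ + 1 := by
    have hdist : ‖x₀ - x‖ < 1 := by rwa [← dist_eq_norm, dist_comm]
    linarith [norm_sub_le_norm_sub_add_norm_sub x₀ x t]
  gcongr ?_ * ?_
  exact rpow_le_rpow_of_nonpos (by positivity) (by linarith [norm_nonneg (x - t)]) hm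

lemma fderiv (hg : HasGrowth (k + 1) m g) : HasGrowth k m (fderiv ℝ g) := (succ_iff.1 hg).2.2

lemma differentiable (hg : HasGrowth (k + 1) m g) : Differentiable ℝ g := (succ_iff.1 hg).2.1

lemma add (hg : HasGrowth k m g) (hh : HasGrowth k m h) : HasGrowth k m (g + h) := by
  refine ⟨hg.1.add hh.1, fun j hj ↦ ?_⟩
  have hj' : (j : WithTop ℕ∞) ≤ k := by exact_mod_cast hj
  rw [iteratedFDeriv_add (hg.1.of_le hj') (hh.1.of_le hj')]
  exact (hg.2 j hj).add (hh.2 j hj)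

lemma const (c : F) : HasGrowth k 0 fun _ : E ↦ c := by
  refine ⟨contDiff_const, fun j _ ↦ ?_⟩
  simp only [rpow_zero]
  rcases j with _ | j
  · refine .of_bound ‖c‖ (Eventually.of_forall fun x ↦ ?_)
    simp
  · rw [iteratedFDeriv_const_of_ne (by simp)]
    exact isBigO_zero _ _

lemma zero : HasGrowth k m (0 : E → F) :=
  ⟨contDiff_const, fun j _ ↦ by rw [iteratedFDeriv_zero]; exact isBigO_zero _ _⟩

lemma sum {ι : Type*} {s : Finset ι} {g : ι → E → F} (hg : ∀ i ∈ s, HasGrowth k m (g i)) :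
    HasGrowth k m (∑ i ∈ s, g i) :=
  Finset.sum_induction g (HasGrowth k m) (fun _ _ ↦ add) zero hg

lemma clm_comp (hg : HasGrowth k m g) (L : F →L[ℝ] G) : HasGrowth k m fun x ↦ L (g x) := by
  refine ⟨L.contDiff.comp hg.1, fun j hj ↦ ?_⟩
  refine .trans (.of_bound ‖L‖ (Eventually.of_forall fun x ↦ ?_)) (hg.2 j hj)
  exact L.norm_iteratedFDeriv_comp_left hg.1.contDiffAt (by exact_mod_cast hj)

lemma fderiv_apply (hg : HasGrowth (k + 1) m g) (v : E) :
    HasGrowth k m fun x ↦ _root_.fderiv ℝ g x v :=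
  hg.fderiv.clm_comp (ContinuousLinearMap.apply ℝ F v)

lemma smul {c : E → ℝ} (hc : HasGrowth k m c) (hg : HasGrowth k m' g) :
    HasGrowth k (m + m') fun x ↦ c x • g x := by
  refine ⟨hc.1.smul hg.1, fun j hj ↦ ?_⟩
  have hterm (i : ℕ) (hi : i ∈ Finset.range (j + 1)) :
      (fun x ↦ j.choose i * ‖iteratedFDeriv ℝ i c x‖ * ‖iteratedFDeriv ℝ (j - i) g x‖)
        =O[⊤] fun x : E ↦ (1 + ‖x‖) ^ (m + m') := by
    have hi' : i ≤ j := Finset.mem_range_succ_iff.1 hi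
    have hadd (x : E) : (1 + ‖x‖) ^ (m + m') = (1 + ‖x‖) ^ m * (1 + ‖x‖) ^ m' :=
      rpow_add (by positivity) _ _
    simp only [hadd]
    exact ((hc.2 i (hi'.trans hj)).norm_left.const_mul_left _).mul
      (hg.2 (j - i) (by lia)).norm_left
  refine .trans (.of_norm_le fun x ↦ ?_) (IsBigO.fun_sum hterm)
  exact norm_iteratedFDeriv_smul_le hc.1 hg.1 x (by exact_mod_cast hj)

lemma const_smul (hg : HasGrowth k m g) (c : ℝ) : HasGrowth k m fun x ↦ c • g x :=
  hg.clm_comp (c • ContinuousLinearMap.id ℝ F)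

lemma clm (L : E →L[ℝ] F) : HasGrowth k 1 L := by
  have hzero : HasGrowth 0 1 L := by
    refine zero_iff.2 ⟨L.continuous, .of_bound ‖L‖ (Eventually.of_forall fun x ↦ ?_)⟩
    rw [rpow_one, Real.norm_of_nonneg (by positivity)]
    exact (L.le_opNorm x).trans (by gcongr; linarith)
  cases k with
  | zero => exact hzero
  | succ k =>
    refine succ_iff.2 ⟨hzero, L.differentiable, ?_⟩
    rw [show _root_.fderiv ℝ L = fun _ ↦ L from funext fun x ↦ L.fderiv]
    exact (const L).mono le_rfl zero_le_one

lemma integrable [MeasurableSpace E] [BorelSpace E] [FiniteDimensional ℝ E]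
    {μ : Measure E} [μ.IsAddHaarMeasure] (hg : HasGrowth k m g)
    (hm : m < -Module.finrank ℝ E) : Integrable g μ := by
  obtain ⟨C, hC⟩ := hg.exists_norm_le
  have hI : Integrable (fun x : E ↦ C * (1 + ‖x‖) ^ (- -m)) μ :=
    (integrable_one_add_norm (by linarith)).const_mul C
  refine hI.mono' hg.continuous.aestronglyMeasurable (ae_of_all _ fun x ↦ ?_)
  simpa only [neg_neg] using hC x

lemma tendsto_norm_pow_mul {g : E → ℝ} (hg : HasGrowth k m g) {n : ℕ} (hm : n + m < 0) :
    Tendsto (fun x ↦ ‖x‖ ^ n * g x) (Bornology.cobounded E) (𝓝 0) := by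
  obtain ⟨C, hC⟩ := hg.exists_norm_le
  have hdecay : Tendsto (fun x : E ↦ C * (1 + ‖x‖) ^ (n + m)) (Bornology.cobounded E) (𝓝 0) := by
    rw [← neg_neg (n + m), ← mul_zero C]
    exact ((tendsto_rpow_neg_atTop (neg_pos.2 hm)).comp
      (tendsto_atTop_add_const_left _ _ tendsto_norm_cobounded_atTop)).const_mul C
  refine squeeze_zero_norm (fun x ↦ ?_) hdecay
  have hx : 0 < 1 + ‖x‖ := by positivity
  rw [norm_mul, norm_pow, norm_norm, rpow_add hx, rpow_natCast, mul_left_comm]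
  gcongr
  · linarith
  · exact hC x

lemma of_forall_apply [FiniteDimensional ℝ E] {A : E → E →L[ℝ] F}
    (hA : ∀ v, HasGrowth k m fun x ↦ A x v) : HasGrowth k m A := by
  let b := Module.finBasis ℝ E
  let coordSmulRight (i) : F →L[ℝ] E →L[ℝ] F :=
    ContinuousLinearMap.smulRightL ℝ E F (b.coord i).toContinuousLinearMap
  have hsum : A = ∑ i, fun x ↦ coordSmulRight i (A x (b i)) := by
    ext x v
    simp only [Finset.sum_apply, sum_apply]
    conv_lhs => rw [← b.sum_repr v, map_sum]
    simp [coordSmulRight]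
  rw [hsum]
  exact sum fun i _ ↦ (hA (b i)).clm_comp _

lemma succ_of_forall_fderiv_apply [FiniteDimensional ℝ E] (h0 : HasGrowth 0 m g)
    (hd : Differentiable ℝ g) (hv : ∀ v, HasGrowth k m fun x ↦ _root_.fderiv ℝ g x v) :
    HasGrowth (k + 1) m g :=
  succ_iff.2 ⟨h0, hd, of_forall_apply hv⟩

lemma zero_rpow_neg {u : E → ℝ} {b p q : ℝ} (hb : 0 < b) (hq : 0 ≤ q)
    (hub : ∀ x, b * (1 + ‖x‖) ^ p ≤ u x) (hu : Continuous u) :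
    HasGrowth 0 (p * -q) fun x ↦ u x ^ (-q) := by
  have hpos (x : E) : 0 < u x := lt_of_lt_of_le (by positivity) (hub x)
  refine zero_iff.2 ⟨hu.rpow_const fun x ↦ .inl (hpos x).ne', ?_⟩
  refine .of_bound (b ^ (-q)) (Eventually.of_forall fun x ↦ ?_)
  have hx : 0 < 1 + ‖x‖ := by positivity
  rw [Real.norm_of_nonneg (rpow_nonneg (hpos x).le _), Real.norm_of_nonneg (by positivity),
    rpow_mul hx.le, ← mul_rpow hb.le (by positivity)]
  exact rpow_le_rpow_of_nonpos (by positivity) (hub x) (by linarith)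

lemma succ_rpow_neg {u : E → ℝ} {b p q : ℝ} (hb : 0 < b) (hq : 0 ≤ q)
    (hub : ∀ x, b * (1 + ‖x‖) ^ p ≤ u x) (hu : Differentiable ℝ u)
    (hu' : HasGrowth k (p - 1) (_root_.fderiv ℝ u)) :
    HasGrowth (k + 1) (p * -q) fun x ↦ u x ^ (-q) := by
  have hne (x : E) : u x ≠ 0 := (lt_of_lt_of_le (by positivity) (hub x)).ne'
  have hfderiv (q : ℝ) : _root_.fderiv ℝ (fun x ↦ u x ^ (-q)) =
      fun x ↦ u x ^ (-(q + 1)) • (-q) • _root_.fderiv ℝ u x := by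
    ext1 x
    rw [((hu x).hasFDerivAt.rpow_const (.inl (hne x))).fderiv, smul_smul, mul_comm, neg_add']
  have hstep {k : ℕ} {q : ℝ} (hq : 0 ≤ q)
      (hpow : HasGrowth k (p * -(q + 1)) fun x ↦ u x ^ (-(q + 1)))
      (hu' : HasGrowth k (p - 1) (_root_.fderiv ℝ u)) :
      HasGrowth (k + 1) (p * -q) fun x ↦ u x ^ (-q) := by
    refine succ_iff.2 ⟨zero_rpow_neg hb hq hub hu.continuous,
      fun x ↦ (hu x).rpow_const (.inl (hne x)), ?_⟩
    rw [hfderiv]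
    exact (hpow.smul (hu'.const_smul (-q))).mono le_rfl (by linarith)
  induction k generalizing q with
  | zero => exact hstep hq (zero_rpow_neg hb (by linarith) hub hu.continuous) hu'
  | succ k ih =>
    exact hstep hq (ih (by linarith) (hu'.mono k.le_succ le_rfl)) hu'

end HasGrowth

end Growth

section BoundedKernel

variable {E F G W : Type*} [NormedAddCommGroup E] [NormedSpace ℝ E] [MeasurableSpace E]
  [BorelSpace E] [FiniteDimensional ℝ E] {μ : Measure E} [μ.IsAddHaarMeasure]
  [NormedAddCommGroup F] [NormedSpace ℝ F] [NormedAddCommGroup G] [NormedSpace ℝ G]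
  [NormedAddCommGroup W] [NormedSpace ℝ W]
  {κ : E → W} {g : E → F} {k : ℕ} {m M : ℝ}

lemma integrable_one_add_norm_sub_rpow (hm : m < -finrank ℝ E) (x : E) :
    Integrable (fun t ↦ (1 + ‖x - t‖) ^ m) μ := by
  have hI : Integrable (fun t : E ↦ (1 + ‖t‖) ^ (- -m)) μ :=
    integrable_one_add_norm (by linarith)
  simpa only [neg_neg] using hI.comp_sub_left x

variable (L : W →L[ℝ] F →L[ℝ] G)

lemma HasGrowth.convolutionExists (hg : HasGrowth k m g) (hm : m < -finrank ℝ E)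
    (hκ : AEStronglyMeasurable κ μ) (hM : ∀ t, ‖κ t‖ ≤ M) : ConvolutionExists κ g L μ :=
  fun x ↦ L.integrable_of_bilin_of_bdd_left M hκ (ae_of_all _ hM)
    ((hg.integrable hm).comp_sub_left x)

lemma HasGrowth.exists_norm_convolution_integrand_le (hg : HasGrowth k m g)
    (hm : m < -finrank ℝ E) (hM : ∀ t, ‖κ t‖ ≤ M) (x₀ : E) :
    ∃ bound : E → ℝ, Integrable bound μ ∧
      ∀ x ∈ Metric.ball x₀ 1, ∀ t, ‖L (κ t) (g (x - t))‖ ≤ bound t := by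
  obtain ⟨C, hC⟩ := hg.exists_norm_sub_le (hm.le.trans (neg_nonpos.2 (Nat.cast_nonneg _)))
  have hM0 : 0 ≤ M := (norm_nonneg _).trans (hM 0)
  refine ⟨fun t ↦ ‖L‖ * M * (C * (1 + ‖x₀ - t‖) ^ m),
    ((integrable_one_add_norm_sub_rpow hm x₀).const_mul C).const_mul _, fun x hx t ↦ ?_⟩
  calc ‖L (κ t) (g (x - t))‖ ≤ ‖L‖ * ‖κ t‖ * ‖g (x - t)‖ := L.le_opNorm₂ _ _
    _ ≤ ‖L‖ * M * (C * (1 + ‖x₀ - t‖) ^ m) := by gcongr; exacts [hM t, hC x₀ x hx t]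

lemma HasGrowth.zero_convolution (hg : HasGrowth k m g) (hm : m < -finrank ℝ E)
    (hκ : AEStronglyMeasurable κ μ) (hM : ∀ t, ‖κ t‖ ≤ M) :
    HasGrowth 0 0 (κ ⋆[L, μ] g) := by
  have hexists := hg.convolutionExists L hm hκ hM
  refine zero_iff.2 ⟨continuous_iff_continuousAt.2 fun x₀ ↦ ?_, ?_⟩
  · obtain ⟨bound, hbound, hle⟩ := hg.exists_norm_convolution_integrand_le (μ := μ) L hm hM x₀
    refine continuousAt_of_dominated (Eventually.of_forall fun x ↦ (hexists x).1) ?_ hbound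
      (ae_of_all _ fun t ↦ ?_)
    · filter_upwards [Metric.ball_mem_nhds x₀ one_pos] with x hx
      exact ae_of_all _ (hle x hx)
    · exact ((L (κ t)).continuous.comp
        (hg.continuous.comp (continuous_id.sub continuous_const))).continuousAt
  · refine .of_bound (‖L‖ * M * ∫ t, ‖g t‖ ∂μ) (Eventually.of_forall fun x ↦ ?_)
    rw [rpow_zero, norm_one, mul_one, ← integral_sub_left_eq_self _ μ x, ← integral_const_mul]
    refine norm_integral_le_of_norm_le
      (((hg.integrable hm).comp_sub_left x).norm.const_mul _) (ae_of_all _ fun t ↦ ?_)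
    exact (L.le_opNorm₂ _ _).trans (by gcongr; exact hM t)

lemma HasGrowth.hasFDerivAt_convolution (hg : HasGrowth (k + 1) m g) (hm : m < -finrank ℝ E)
    (hκ : AEStronglyMeasurable κ μ) (hM : ∀ t, ‖κ t‖ ≤ M) (x₀ : E) :
    HasFDerivAt (κ ⋆[L, μ] g) ((κ ⋆[L.precompR E, μ] _root_.fderiv ℝ g) x₀) x₀ := by
  obtain ⟨bound, hbound, hle⟩ :=
    hg.fderiv.exists_norm_convolution_integrand_le (μ := μ) (L.precompR E) hm hM x₀
  have hexists := hg.convolutionExists L hm hκ hM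
  refine hasFDerivAt_integral_of_dominated_of_fderiv_le (Metric.ball_mem_nhds x₀ one_pos)
    (Eventually.of_forall fun x ↦ (hexists x).1) (hexists x₀)
    (hg.fderiv.convolutionExists (L.precompR E) hm hκ hM x₀).1
    (ae_of_all _ fun t x hx ↦ hle x hx t) hbound (ae_of_all _ fun t x _ ↦ ?_)
  exact (L (κ t)).hasFDerivAt.comp x
    ((hg.differentiable (x - t)).hasFDerivAt.comp x ((hasFDerivAt_id x).sub_const t))

lemma HasGrowth.fderiv_convolution_apply (hg : HasGrowth (k + 1) m g) (hm : m < -finrank ℝ E)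
    (hκ : AEStronglyMeasurable κ μ) (hM : ∀ t, ‖κ t‖ ≤ M) (x v : E) :
    _root_.fderiv ℝ (κ ⋆[L, μ] g) x v = (κ ⋆[L, μ] fun y ↦ _root_.fderiv ℝ g y v) x := by
  rw [(hg.hasFDerivAt_convolution L hm hκ hM x).fderiv, convolution_def,
    ContinuousLinearMap.integral_apply (hg.fderiv.convolutionExists (L.precompR E) hm hκ hM x)]
  rfl

lemma HasGrowth.convolution (hg : HasGrowth k m g) (hm : m < -finrank ℝ E)
    (hκ : AEStronglyMeasurable κ μ) (hM : ∀ t, ‖κ t‖ ≤ M) :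
    HasGrowth k 0 (κ ⋆[L, μ] g) := by
  induction k generalizing g with
  | zero => exact hg.zero_convolution L hm hκ hM
  | succ k ih =>
    refine .succ_of_forall_fderiv_apply (hg.zero_convolution L hm hκ hM)
      (fun x ↦ (hg.hasFDerivAt_convolution L hm hκ hM x).differentiableAt) fun v ↦ ?_
    simp only [hg.fderiv_convolution_apply L hm hκ hM]
    exact ih (hg.fderiv_apply v)

end BoundedKernel

section LipschitzPotential

variable {E : Type*} [NormedAddCommGroup E] {φ f g : E → ℝ} {C : ℝ≥0}

lemma abs_sub_sub_neg_le_of_lipschitzWith (hφ : LipschitzWith C φ) (x y : E) :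
    |φ (x - y) - φ (-y)| ≤ C * ‖x‖ := by
  simpa [Real.dist_eq] using hφ.dist_le_mul (x - y) (-y)

variable [MeasurableSpace E] {μ : Measure E}

/-- The potential of the density `f` with respect to the kernel `φ`, renormalised to vanish at the
origin. For Lipschitz `φ` subtracting `φ (-y)` makes the integral converge as soon as `f` is
integrable. -/
noncomputable def lipschitzPotential (μ : Measure E) (φ f : E → ℝ) (x : E) : ℝ :=
  ∫ y, (φ (x - y) - φ (-y)) * f y ∂μ

lemma abs_lipschitzPotential_le (hφ : LipschitzWith C φ) (hf : Integrable f μ)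
    (x : E) : |lipschitzPotential μ φ f x| ≤ C * ‖x‖ * ∫ y, |f y| ∂μ := by
  rw [lipschitzPotential, ← Real.norm_eq_abs, ← integral_const_mul]
  refine norm_integral_le_of_norm_le (hf.abs.const_mul _) (ae_of_all _ fun y ↦ ?_)
  rw [norm_mul]
  exact mul_le_mul_of_nonneg_right (abs_sub_sub_neg_le_of_lipschitzWith hφ x y) (abs_nonneg _)

lemma abs_lipschitzPotential_div_le (hφ : LipschitzWith C φ) (hf : Integrable f μ) (x : E) :
    |lipschitzPotential μ φ f x / (1 + ‖x‖)| ≤ C * ∫ y, |f y| ∂μ := by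
  have hx : 0 < 1 + ‖x‖ := by positivity
  rw [abs_div, abs_of_pos hx, div_le_iff₀ hx, mul_right_comm]
  refine (abs_lipschitzPotential_le hφ hf x).trans ?_
  gcongr
  linarith

variable [BorelSpace E]

lemma integrable_lipschitzPotential_integrand (hφ : LipschitzWith C φ) (hf : Integrable f μ)
    (x : E) : Integrable (fun y ↦ (φ (x - y) - φ (-y)) * f y) μ := by
  have hcont : Continuous fun y ↦ φ (x - y) - φ (-y) := by
    have := hφ.continuous
    fun_prop
  exact hf.bdd_mul hcont.aestronglyMeasurable
    (ae_of_all _ (abs_sub_sub_neg_le_of_lipschitzWith hφ x))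

lemma lipschitzPotential_sub (hφ : LipschitzWith C φ) (hf : Integrable f μ)
    (hg : Integrable g μ) (x : E) : lipschitzPotential μ φ (f - g) x =
      lipschitzPotential μ φ f x - lipschitzPotential μ φ g x := by
  rw [lipschitzPotential, lipschitzPotential, lipschitzPotential, ← integral_sub
    (integrable_lipschitzPotential_integrand hφ hf x)
    (integrable_lipschitzPotential_integrand hφ hg x)]
  simp only [Pi.sub_apply, mul_sub]

end LipschitzPotential

section LipschitzPotentialDerivative

variable {E : Type*} [NormedAddCommGroup E] [NormedSpace ℝ E] [FiniteDimensional ℝ E]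
  [MeasurableSpace E] [BorelSpace E] {μ : Measure E} [μ.IsAddHaarMeasure] {φ f : E → ℝ} {C : ℝ≥0}

lemma hasFDerivAt_lipschitzPotential (hφ : LipschitzWith C φ) (hf : Integrable f μ) (x : E) :
    HasFDerivAt (lipschitzPotential μ φ f)
      ((fderiv ℝ φ ⋆[(ContinuousLinearMap.lsmul ℝ ℝ).flip, μ] f) x) x := by
  rw [convolution_flip]
  have hdiff : ∀ᵐ y ∂μ, DifferentiableAt ℝ φ (x - y) :=
    (quasiMeasurePreserving_sub_left_of_right_invariant μ x).ae hφ.ae_differentiableAt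
  have hmeas : AEStronglyMeasurable (fun y ↦ f y • fderiv ℝ φ (x - y)) μ :=
    hf.1.smul ((measurable_fderiv ℝ φ).comp
      (measurable_const.sub measurable_id)).aestronglyMeasurable
  refine (hasFDerivAt_integral_of_dominated_loc_of_lip (bound := fun y ↦ C * |f y|) univ_mem
    (Eventually.of_forall fun z ↦ (integrable_lipschitzPotential_integrand hφ hf z).1)
    (integrable_lipschitzPotential_integrand hφ hf x) hmeas (ae_of_all _ fun y ↦ ?_)
    (hf.abs.const_mul _) ?_).2
  · refine (LipschitzWith.of_dist_le_mul fun z w ↦ ?_).lipschitzOnWith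
    have hdist : |φ (z - y) - φ (w - y)| ≤ C * dist z w := by
      simpa [Real.dist_eq] using hφ.dist_le_mul (z - y) (w - y)
    rw [Real.dist_eq, ← sub_mul, sub_sub_sub_cancel_right, abs_mul, Real.coe_nnabs,
      abs_of_nonneg (mul_nonneg C.coe_nonneg (abs_nonneg (f y))), mul_right_comm]
    gcongr
  · filter_upwards [hdiff] with y hy
    exact ((hy.hasFDerivAt.comp x ((hasFDerivAt_id x).sub_const y)).sub_const
      (φ (-y))).mul_const (f y)

lemma differentiable_lipschitzPotential (hφ : LipschitzWith C φ) (hf : Integrable f μ) :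
    Differentiable ℝ (lipschitzPotential μ φ f) :=
  fun x ↦ (hasFDerivAt_lipschitzPotential hφ hf x).differentiableAt

end LipschitzPotentialDerivative

section Gradient

variable {E : Type*} [NormedAddCommGroup E] [InnerProductSpace ℝ E] [CompleteSpace E]
  {g : E → ℝ} {C : ℝ≥0} {k : ℕ} {m : ℝ}

lemma HasGrowth.gradient (hg : HasGrowth (k + 1) m g) : HasGrowth k m (∇ g) :=
  hg.fderiv.clm_comp
    (InnerProductSpace.toDual ℝ E).symm.toContinuousLinearEquiv.toContinuousLinearMap

lemma norm_gradient_le_of_lipschitzWith (hg : LipschitzWith C g) (x : E) : ‖∇ g x‖ ≤ C := by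
  rw [gradient, LinearIsometryEquiv.norm_map]
  exact norm_fderiv_le_of_lipschitz ℝ hg

lemma measurable_gradient [MeasurableSpace E] [BorelSpace E] (g : E → ℝ) : Measurable (∇ g) :=
  (InnerProductSpace.toDual ℝ E).symm.continuous.measurable.comp (measurable_fderiv ℝ g)

end Gradient

section DirectionalDerivative

variable {E F : Type*} [NormedAddCommGroup E] [NormedSpace ℝ E] [NormedAddCommGroup F]
  [NormedSpace ℝ F] {g : E → F}

lemma contDiff_fderiv_apply {n : ℕ} (hg : ContDiff ℝ (n + 1 : ℕ) g) (v : E) :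
    ContDiff ℝ n fun x ↦ fderiv ℝ g x v :=
  (hg.fderiv_right (m := n) le_rfl).clm_apply contDiff_const

lemma fderiv_fderiv_apply (hg : ContDiff ℝ 2 g) (x v w : E) :
    fderiv ℝ (fun y ↦ fderiv ℝ g y v) x w = fderiv ℝ (fderiv ℝ g) x w v := by
  have hd : Differentiable ℝ (fderiv ℝ g) :=
    (hg.fderiv_right (m := 1) le_rfl).differentiable one_ne_zero
  rw [fderiv_clm_apply (hd x) (differentiableAt_const v)]
  simp

lemma fderiv_apply_comm (hg : ContDiff ℝ 2 g) (v w : E) :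
    (fun x ↦ fderiv ℝ (fun y ↦ fderiv ℝ g y v) x w) =
      fun x ↦ fderiv ℝ (fun y ↦ fderiv ℝ g y w) x v := by
  ext1 x
  rw [fderiv_fderiv_apply hg, fderiv_fderiv_apply hg]
  exact hg.contDiffAt.isSymmSndFDerivAt (by simp) w v

end DirectionalDerivative

section Laplacian

variable {E F : Type*} [NormedAddCommGroup E] [InnerProductSpace ℝ E] [FiniteDimensional ℝ E]
  [NormedAddCommGroup F] [NormedSpace ℝ F] {ι : Type*} [Fintype ι] {g : E → F} {k : ℕ} {m : ℝ}

lemma laplacian_eq_sum_fderiv_apply (b : OrthonormalBasis ι ℝ E) (hg : ContDiff ℝ 2 g) (x : E) :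
    Δ g x = ∑ i, fderiv ℝ (fun y ↦ fderiv ℝ g y (b i)) x (b i) := by
  simp only [InnerProductSpace.laplacian_eq_iteratedFDeriv_orthonormalBasis g b,
    iteratedFDeriv_two_apply, fderiv_fderiv_apply hg, Matrix.cons_val_zero, Matrix.cons_val_one]

lemma contDiff_laplacian {n : ℕ} (hg : ContDiff ℝ (n + 2 : ℕ) g) : ContDiff ℝ n (Δ g) := by
  let b := stdOrthonormalBasis ℝ E
  have hlap : Δ g = fun x ↦ ∑ i, fderiv ℝ (fun y ↦ fderiv ℝ g y (b i)) x (b i) :=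
    funext (laplacian_eq_sum_fderiv_apply b (hg.of_le (by norm_cast; lia)))
  rw [hlap]
  exact ContDiff.sum fun i _ ↦ contDiff_fderiv_apply (contDiff_fderiv_apply hg (b i)) (b i)

lemma laplacian_of_fderiv_eq (b : OrthonormalBasis ι ℝ E) {L : E →L[ℝ] E →L[ℝ] F}
    (hg : fderiv ℝ g = L) : Δ g = fun _ ↦ ∑ i, L (b i) (b i) := by
  ext1 x
  simp [InnerProductSpace.laplacian_eq_iteratedFDeriv_orthonormalBasis g b,
    iteratedFDeriv_two_apply, hg]

lemma laplacian_fderiv_apply (hg : ContDiff ℝ 3 g) (v : E) :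
    Δ (fun x ↦ fderiv ℝ g x v) = fun x ↦ fderiv ℝ (Δ g) x v := by
  let b := stdOrthonormalBasis ℝ E
  have hg2 : ContDiff ℝ 2 g := hg.of_le (by norm_num)
  have hdir (w : E) : ContDiff ℝ 2 fun x ↦ fderiv ℝ g x w := contDiff_fderiv_apply hg w
  have hlap : Δ g = fun x ↦ ∑ i, fderiv ℝ (fun y ↦ fderiv ℝ g y (b i)) x (b i) :=
    funext (laplacian_eq_sum_fderiv_apply b hg2)
  ext1 x
  rw [laplacian_eq_sum_fderiv_apply b (hdir v), hlap, fderiv_fun_sum fun i _ ↦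
    (contDiff_fderiv_apply (hdir (b i)) (b i)).differentiable one_ne_zero x, sum_apply]
  refine Finset.sum_congr rfl fun i _ ↦ ?_
  rw [fderiv_apply_comm hg2 v (b i)]
  exact congrFun (fderiv_apply_comm (hdir (b i)) v (b i)) x

lemma HasGrowth.laplacian (hg : HasGrowth (k + 2) m g) : HasGrowth k m (Δ g) := by
  have hlap : Δ g = ∑ i, fun x ↦ _root_.fderiv ℝ
      (fun y ↦ _root_.fderiv ℝ g y (stdOrthonormalBasis ℝ E i)) x (stdOrthonormalBasis ℝ E i) := by
    ext1 x
    rw [Finset.sum_apply]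
    exact laplacian_eq_sum_fderiv_apply _ (hg.1.of_le (by exact_mod_cast Nat.le_add_left 2 k)) x
  rw [hlap]
  exact sum fun i _ ↦ (hg.fderiv_apply _).fderiv_apply _

end Laplacian

section LaplacianConvolution

variable {E F G W : Type*} [NormedAddCommGroup E] [InnerProductSpace ℝ E] [FiniteDimensional ℝ E]
  [MeasurableSpace E] [BorelSpace E] {μ : Measure E} [μ.IsAddHaarMeasure]
  [NormedAddCommGroup F] [NormedSpace ℝ F] [NormedAddCommGroup G] [NormedSpace ℝ G]
  [NormedAddCommGroup W] [NormedSpace ℝ W]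
  {κ : E → W} {g : E → F} {m M : ℝ} (L : W →L[ℝ] F →L[ℝ] G)

lemma HasGrowth.laplacian_convolution (hg : HasGrowth 2 m g) (hm : m < -finrank ℝ E)
    (hκ : AEStronglyMeasurable κ μ) (hM : ∀ t, ‖κ t‖ ≤ M) :
    Δ (κ ⋆[L, μ] g) = κ ⋆[L, μ] Δ g := by
  let b := stdOrthonormalBasis ℝ E
  ext1 x
  rw [laplacian_eq_sum_fderiv_apply b (hg.convolution L hm hκ hM).1]
  simp only [hg.fderiv_convolution_apply L hm hκ hM,
    (hg.fderiv_apply _).fderiv_convolution_apply L hm hκ hM]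
  have hint (i) := ((hg.fderiv_apply (b i)).fderiv_apply (b i)).convolutionExists L hm hκ hM x
  simp only [convolution_def]
  rw [← integral_finsetSum _ fun i _ ↦ hint i]
  simp only [laplacian_eq_sum_fderiv_apply b hg.1, map_sum]

end LaplacianConvolution

section Green

variable {E : Type*} [NormedAddCommGroup E] [InnerProductSpace ℝ E] [FiniteDimensional ℝ E]
  [MeasurableSpace E] [BorelSpace E] {a g : E → ℝ} {m M : ℝ}

lemma HasGrowth.convolution_fderiv_apply (ha : HasGrowth 1 0 a) (hg : HasGrowth 1 m g)
    (hm : m < -finrank ℝ E) (v : E) :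
    (a ⋆ fun y ↦ _root_.fderiv ℝ g y v) = (fun y ↦ _root_.fderiv ℝ a y v) ⋆ g := by
  obtain ⟨A, hA⟩ := ha.exists_norm_le_of_zero
  obtain ⟨A', hA'⟩ := (ha.fderiv_apply v).exists_norm_le_of_zero
  have hmeas := ha.continuous.aestronglyMeasurable (μ := volume)
  have hmeas' := (ha.fderiv_apply v).continuous.aestronglyMeasurable (μ := volume)
  ext1 x
  have hshift (t : E) : HasFDerivAt (fun t ↦ g (x - t)) (-_root_.fderiv ℝ g (x - t)) t := by
    have hcomp := (hg.differentiable (x - t)).hasFDerivAt.comp t ((hasFDerivAt_id t).const_sub x)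
    rwa [ContinuousLinearMap.comp_neg, ContinuousLinearMap.comp_id] at hcomp
  have hparts := integral_mul_fderiv_eq_neg_fderiv_mul_of_integrable (μ := volume) (v := v)
    (f := a) (g := fun t ↦ g (x - t)) (hg.convolutionExists (.lsmul ℝ ℝ) hm hmeas' hA' x)
    (by simpa [(hshift _).fderiv] using
      (((hg.fderiv_apply v).convolutionExists (.lsmul ℝ ℝ) hm hmeas hA) x).neg)
    (hg.convolutionExists (.lsmul ℝ ℝ) hm hmeas hA x) (fun t _ ↦ ha.differentiable t)
    (fun t _ ↦ (hshift t).differentiableAt)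
  simpa [(hshift _).fderiv, integral_neg, convolution_def] using hparts

local instance : CompleteSpace E := FiniteDimensional.complete ℝ E

lemma HasGrowth.gradient_convolution_gradient_apply {ι : Type*} [Fintype ι]
    (b : OrthonormalBasis ι ℝ E) (hg : HasGrowth 1 m g) (hm : m < -finrank ℝ E)
    (hM : ∀ x, ‖_root_.fderiv ℝ a x‖ ≤ M) (x : E) : (∇ a ⋆[innerSL ℝ] ∇ g) x =
      ∑ i, ((fun y ↦ _root_.fderiv ℝ a y (b i)) ⋆ fun y ↦ _root_.fderiv ℝ g y (b i)) x := by
  have hbound (i : ι) (t : E) : ‖_root_.fderiv ℝ a t (b i)‖ ≤ M :=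
    ((_root_.fderiv ℝ a t).le_opNorm _).trans (by simpa using hM t)
  have hint (i : ι) := (hg.fderiv_apply (b i)).convolutionExists (.lsmul ℝ ℝ) hm
    (measurable_fderiv_apply_const ℝ a (b i)).aestronglyMeasurable (hbound i) x (μ := volume)
  simp only [convolution_def]
  rw [← integral_finsetSum _ fun i _ ↦ hint i]
  refine integral_congr_ae (ae_of_all _ fun t ↦ ?_)
  beta_reduce
  rw [innerSL_apply_apply, ← b.sum_inner_mul_inner]
  simp [inner_gradient_left]

lemma gradient_convolution_gradient_eq_laplacian_convolution (ha : ContDiff ℝ 2 a)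
    (ha' : HasGrowth 1 0 (fderiv ℝ a)) (hg : HasGrowth 1 m g) (hm : m < -finrank ℝ E) :
    ∇ a ⋆[innerSL ℝ] ∇ g = Δ a ⋆ g := by
  let b := stdOrthonormalBasis ℝ E
  obtain ⟨M, hM⟩ := ha'.exists_norm_le_of_zero
  have hdir (i) : HasGrowth 1 0 fun y ↦ fderiv ℝ a y (b i) :=
    ha'.clm_comp (ContinuousLinearMap.apply ℝ ℝ (b i))
  ext1 x
  rw [hg.gradient_convolution_gradient_apply b hm hM, Finset.sum_congr rfl fun i _ ↦
    congrFun ((hdir i).convolution_fderiv_apply hg hm (b i)) x]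
  simp only [convolution_def]
  rw [← integral_finsetSum _ fun i _ ↦ ?_]
  · simp only [laplacian_eq_sum_fderiv_apply b ha, map_sum, sum_apply]
  · obtain ⟨A, hA⟩ := ((hdir i).fderiv_apply (b i)).exists_norm_le_of_zero
    exact hg.convolutionExists (.lsmul ℝ ℝ) hm
      ((hdir i).fderiv_apply (b i)).continuous.aestronglyMeasurable hA x

lemma gradient_convolution_gradient_eq_convolution_laplacian (ha : HasGrowth 1 0 a)
    (hg : HasGrowth 2 m g) (hm : m < -finrank ℝ E) :
    ∇ a ⋆[innerSL ℝ] ∇ g = a ⋆ Δ g := by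
  let b := stdOrthonormalBasis ℝ E
  obtain ⟨A, hA⟩ := ha.exists_norm_le_of_zero
  obtain ⟨M, hM⟩ := ha.fderiv.exists_norm_le_of_zero
  have hdir (i) : HasGrowth 1 m fun y ↦ fderiv ℝ g y (b i) := hg.fderiv_apply (b i)
  have hint (i) := ((hdir i).fderiv_apply (b i)).convolutionExists (.lsmul ℝ ℝ) hm
    (ha.continuous.aestronglyMeasurable (μ := volume)) hA
  ext1 x
  rw [(hg.mono one_le_two le_rfl).gradient_convolution_gradient_apply b hm hM,
    Finset.sum_congr rfl fun i _ ↦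
      congrFun (ha.convolution_fderiv_apply (hdir i) hm (b i)).symm x]
  simp only [convolution_def]
  rw [← integral_finsetSum _ fun i _ ↦ hint i x]
  simp only [laplacian_eq_sum_fderiv_apply b hg.1, map_sum]

lemma convolution_laplacian_comm (ha : HasGrowth 2 0 a) (hg : HasGrowth 2 m g)
    (hm : m < -finrank ℝ E) : a ⋆ Δ g = Δ a ⋆ g := by
  rw [← gradient_convolution_gradient_eq_laplacian_convolution ha.1 ha.fderiv
    (hg.mono one_le_two le_rfl) hm, gradient_convolution_gradient_eq_convolution_laplacian
    (ha.mono one_le_two le_rfl) hg hm]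

end Green

section LaplacianPotential

variable {E : Type*} [NormedAddCommGroup E] [InnerProductSpace ℝ E] [FiniteDimensional ℝ E]

local instance : CompleteSpace E := FiniteDimensional.complete ℝ E

lemma laplacian_gradient {g : E → ℝ} (hg : ContDiff ℝ 3 g) : Δ (∇ g) = ∇ (Δ g) := by
  have hfderiv : ContDiff ℝ 2 (fderiv ℝ g) := hg.fderiv_right le_rfl
  ext1 x
  let dual := (InnerProductSpace.toDual ℝ E).symm.toContinuousLinearEquiv
  have hcomp : Δ (∇ g) x = dual (Δ (fderiv ℝ g) x) :=
    congrFun (InnerProductSpace.laplacian_CLE_comp_left (l := dual) (f := fderiv ℝ g)) x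
  rw [hcomp]
  refine congrArg dual (ContinuousLinearMap.ext fun v ↦ ?_)
  have happly := hfderiv.contDiffAt.laplacian_CLM_comp_left (x := x)
    (l := ContinuousLinearMap.apply ℝ ℝ v)
  exact happly.symm.trans (congrFun (laplacian_fderiv_apply hg v) x)

variable [MeasurableSpace E] [BorelSpace E] {φ f : E → ℝ} {C : ℝ≥0} {k : ℕ} {m : ℝ}

lemma hasGrowth_fderiv_lipschitzPotential (hφ : LipschitzWith C φ) (hf : HasGrowth k m f)
    (hm : m < -finrank ℝ E) : HasGrowth k 0 (fderiv ℝ (lipschitzPotential volume φ f)) := by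
  have hfderiv : fderiv ℝ (lipschitzPotential volume φ f) =
      fderiv ℝ φ ⋆[(ContinuousLinearMap.lsmul ℝ ℝ).flip] f :=
    funext fun x ↦ (hasFDerivAt_lipschitzPotential hφ (hf.integrable hm) x).fderiv
  rw [hfderiv]
  exact hf.convolution _ hm (measurable_fderiv ℝ φ).aestronglyMeasurable
    fun t ↦ norm_fderiv_le_of_lipschitz ℝ hφ

lemma contDiff_lipschitzPotential (hφ : LipschitzWith C φ) (hf : HasGrowth k m f)
    (hm : m < -finrank ℝ E) : ContDiff ℝ (k + 1 : ℕ) (lipschitzPotential volume φ f) := by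
  rw [Nat.cast_succ, contDiff_succ_iff_fderiv]
  exact ⟨differentiable_lipschitzPotential hφ (hf.integrable hm), by simp,
    (hasGrowth_fderiv_lipschitzPotential hφ hf hm).1⟩

lemma fderiv_lipschitzPotential_apply (hφ : LipschitzWith C φ) (hf : HasGrowth k m f)
    (hm : m < -finrank ℝ E) (v : E) : (fun x ↦ fderiv ℝ (lipschitzPotential volume φ f) x v) =
      (fun z ↦ fderiv ℝ φ z v) ⋆ f := by
  ext1 x
  have hexists : ConvolutionExistsAt (fderiv ℝ φ) f x (ContinuousLinearMap.lsmul ℝ ℝ).flip :=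
    hf.convolutionExists _ hm (measurable_fderiv ℝ φ).aestronglyMeasurable
      (fun t ↦ norm_fderiv_le_of_lipschitz ℝ hφ) x
  rw [(hasFDerivAt_lipschitzPotential hφ (hf.integrable hm) x).fderiv, convolution_def,
    ContinuousLinearMap.integral_apply hexists.integrable]
  simp [convolution_def, mul_comm]

lemma laplacian_lipschitzPotential (hφ : LipschitzWith C φ) (hf : HasGrowth 1 m f)
    (hm : m < -finrank ℝ E) :
    Δ (lipschitzPotential volume φ f) = ∇ φ ⋆[innerSL ℝ] ∇ f := by
  let b := stdOrthonormalBasis ℝ E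
  have hbound (v t : E) : ‖fderiv ℝ φ t v‖ ≤ C * ‖v‖ :=
    (fderiv ℝ φ t).le_of_opNorm_le (norm_fderiv_le_of_lipschitz ℝ hφ) v
  ext1 x
  rw [laplacian_eq_sum_fderiv_apply b (contDiff_lipschitzPotential hφ hf hm),
    hf.gradient_convolution_gradient_apply b hm fun t ↦ norm_fderiv_le_of_lipschitz ℝ hφ]
  refine Finset.sum_congr rfl fun i _ ↦ ?_
  rw [fderiv_lipschitzPotential_apply hφ hf hm]
  exact hf.fderiv_convolution_apply _ hm
    (measurable_fderiv_apply_const ℝ φ _).aestronglyMeasurable (hbound _) x _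

lemma laplacian_laplacian_lipschitzPotential (hφ : LipschitzWith C φ) (hf : HasGrowth 3 m f)
    (hm : m < -finrank ℝ E) :
    Δ (Δ (lipschitzPotential volume φ f)) = ∇ φ ⋆[innerSL ℝ] ∇ (Δ f) := by
  rw [laplacian_lipschitzPotential hφ (hf.mono (by norm_num) le_rfl) hm, ← laplacian_gradient hf.1]
  exact hf.gradient.laplacian_convolution _ hm (measurable_gradient φ).aestronglyMeasurable
    (norm_gradient_le_of_lipschitzWith hφ)

end LaplacianPotential

section SmoothNormPow

/-- `smoothNormPow ε s z = (‖z‖² + ε²) ^ s`, the smooth approximation of `‖z‖ ^ (2 * s)`. -/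
noncomputable def smoothNormPow {E : Type*} [Norm E] (ε s : ℝ) (z : E) : ℝ :=
  (‖z‖ ^ 2 + ε ^ 2) ^ s

variable {E : Type*} [NormedAddCommGroup E] {ε q : ℝ}

lemma smoothNormPow_sub_one_mul (hε : ε ≠ 0) (s : ℝ) (z : E) :
    smoothNormPow ε (s - 1) z * ‖z‖ ^ 2 =
      smoothNormPow ε s z - ε ^ 2 * smoothNormPow ε (s - 1) z := by
  have hpos : 0 < ‖z‖ ^ 2 + ε ^ 2 := by positivity
  rw [smoothNormPow, smoothNormPow, rpow_sub_one hpos.ne']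
  field_simp
  ring

variable [InnerProductSpace ℝ E]

lemma contDiff_smoothNormPow (hε : ε ≠ 0) (s : ℝ) {n : WithTop ℕ∞} :
    ContDiff ℝ n (smoothNormPow ε s : E → ℝ) :=
  ((contDiff_norm_sq ℝ).add contDiff_const).rpow_const_of_ne fun z ↦ by positivity

lemma hasFDerivAt_smoothNormPow (hε : ε ≠ 0) (s : ℝ) (z : E) :
    HasFDerivAt (smoothNormPow ε s) ((2 * s * smoothNormPow ε (s - 1) z) • innerSL ℝ z) z := by
  have hsq : HasFDerivAt (fun z : E ↦ ‖z‖ ^ 2 + ε ^ 2) (2 • innerSL ℝ z) z :=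
    (hasStrictFDerivAt_norm_sq z).hasFDerivAt.add_const _
  refine (hsq.rpow_const (p := s) (.inl (by positivity))).congr_fderiv ?_
  rw [← Nat.cast_smul_eq_nsmul ℝ, smul_smul, smoothNormPow]
  push_cast
  ring_nf

lemma fderiv_smoothNormPow_apply (hε : ε ≠ 0) (s : ℝ) (z v : E) :
    fderiv ℝ (smoothNormPow ε s) z v = 2 * s * smoothNormPow ε (s - 1) z * inner ℝ z v := by
  simp [(hasFDerivAt_smoothNormPow hε s z).fderiv]

lemma laplacian_smoothNormPow [FiniteDimensional ℝ E] (hε : ε ≠ 0) (s : ℝ) :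
    Δ (smoothNormPow ε s : E → ℝ) =
      (2 * s * (finrank ℝ E + 2 * s - 2)) • smoothNormPow ε (s - 1) +
        (-4 * s * (s - 1) * ε ^ 2) • smoothNormPow ε (s - 2) := by
  let b := stdOrthonormalBasis ℝ E
  ext1 z
  have hsecond (i) : fderiv ℝ (fun y ↦ fderiv ℝ (smoothNormPow ε s) y (b i)) z (b i) =
      2 * s * (2 * (s - 1) * smoothNormPow ε (s - 1 - 1) z *
        (inner ℝ z (b i) * inner ℝ (b i) z) + smoothNormPow ε (s - 1) z) := by
    simp only [fderiv_smoothNormPow_apply hε, real_inner_comm (b i)]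
    have hinner : HasFDerivAt (fun y ↦ inner ℝ (b i) y) (innerSL ℝ (b i)) z :=
      (innerSL ℝ (b i)).hasFDerivAt
    rw [(((hasFDerivAt_smoothNormPow hε (s - 1) z).const_mul (2 * s)).fun_mul hinner).fderiv]
    simp [real_inner_comm (b i) z]
    ring
  have hnorm := smoothNormPow_sub_one_mul hε (s - 1) z
  rw [laplacian_eq_sum_fderiv_apply b (contDiff_smoothNormPow hε s)]
  simp only [hsecond]
  rw [← Finset.mul_sum, Finset.sum_add_distrib, ← Finset.mul_sum, b.sum_inner_mul_inner,
    real_inner_self_eq_norm_sq, Finset.sum_const, Finset.card_univ, Fintype.card_fin, nsmul_eq_mul]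
  simp only [Pi.add_apply, Pi.smul_apply, smul_eq_mul]
  rw [sub_sub, one_add_one_eq_two] at hnorm ⊢
  linear_combination 4 * s * (s - 1) * hnorm

lemma smoothNormPow_inv {c : ℝ} (hc : 0 < c) (s : ℝ) (z : E) :
    smoothNormPow c⁻¹ s z = c ^ (2 * -s) * smoothNormPow 1 s (c • z) := by
  rw [smoothNormPow, smoothNormPow, norm_smul, norm_of_nonneg hc.le, mul_neg, rpow_neg hc.le,
    rpow_mul hc.le, ← inv_rpow (by positivity), ← mul_rpow (by positivity) (by positivity),
    rpow_two]
  congr 1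
  field_simp

lemma hasGrowth_smoothNormPow_neg (hε : ε ≠ 0) (hq : 0 ≤ q) (k : ℕ) :
    HasGrowth k (2 * -q) (smoothNormPow ε (-q) : E → ℝ) := by
  have hlower (z : E) : min 1 (ε ^ 2) / 2 * (1 + ‖z‖) ^ (2 : ℝ) ≤ ‖z‖ ^ 2 + ε ^ 2 := by
    rw [rpow_two]
    calc min 1 (ε ^ 2) / 2 * (1 + ‖z‖) ^ 2 ≤ min 1 (ε ^ 2) * (‖z‖ ^ 2 + 1) := by
          have : 0 < min 1 (ε ^ 2) := by positivity
          nlinarith [mul_nonneg this.le (sq_nonneg (‖z‖ - 1))]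
      _ ≤ ‖z‖ ^ 2 + ε ^ 2 := by
          rw [mul_add, mul_one]
          exact add_le_add (mul_le_of_le_one_left (sq_nonneg _) (min_le_left _ _))
            (min_le_right _ _)
  have hb : 0 < min 1 (ε ^ 2) / 2 := by positivity
  have hfderiv (z : E) : HasFDerivAt (fun z : E ↦ ‖z‖ ^ 2 + ε ^ 2) (2 • innerSL ℝ z) z :=
    (hasStrictFDerivAt_norm_sq z).hasFDerivAt.add_const _
  refine HasGrowth.mono ?_ k.le_succ le_rfl
  refine HasGrowth.succ_rpow_neg hb hq hlower (fun z ↦ (hfderiv z).differentiableAt) ?_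
  rw [show fderiv ℝ (fun z : E ↦ ‖z‖ ^ 2 + ε ^ 2) = (2 • innerSL ℝ : E →L[ℝ] E →L[ℝ] ℝ) from
    funext fun z ↦ (hfderiv z).fderiv]
  exact (HasGrowth.clm _).mono le_rfl (by norm_num)

end SmoothNormPow

section NormApproximation

variable {E : Type*} [NormedAddCommGroup E] [InnerProductSpace ℝ E] {ε : ℝ} {k : ℕ}

lemma hasGrowth_fderiv_smoothNormPow_half (hε : ε ≠ 0) :
    HasGrowth k 0 (fderiv ℝ (smoothNormPow ε (1 / 2) : E → ℝ)) := by
  rw [show fderiv ℝ (smoothNormPow ε (1 / 2) : E → ℝ) =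
    fun z ↦ smoothNormPow ε (-(1 / 2)) z • innerSL ℝ z by
      ext1 z
      rw [(hasFDerivAt_smoothNormPow hε _ z).fderiv]
      norm_num]
  have hpow : HasGrowth k (2 * -(1 / 2)) (smoothNormPow ε (-(1 / 2)) : E → ℝ) :=
    hasGrowth_smoothNormPow_neg hε (by norm_num) k
  exact (hpow.smul (HasGrowth.clm (innerSL ℝ))).mono le_rfl (by norm_num)

variable [CompleteSpace E]

lemma gradient_smoothNormPow_half (hε : ε ≠ 0) (z : E) :
    ∇ (smoothNormPow ε (1 / 2)) z = smoothNormPow ε (-(1 / 2)) z • z := by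
  refine ext_inner_right ℝ fun v ↦ ?_
  rw [inner_gradient_left, fderiv_smoothNormPow_apply hε, real_inner_smul_left]
  norm_num

lemma norm_gradient_smoothNormPow_half_le (hε : ε ≠ 0) (z : E) :
    ‖∇ (smoothNormPow ε (1 / 2)) z‖ ≤ 1 := by
  rw [gradient_smoothNormPow_half hε, norm_smul, smoothNormPow, rpow_neg (by positivity),
    ← sqrt_eq_rpow, norm_of_nonneg (by positivity)]
  refine inv_mul_le_one_of_le₀ ?_ (by positivity)
  exact le_sqrt_of_sq_le (by linarith [sq_nonneg ε])

lemma gradient_norm (z : E) : ∇ (fun z : E ↦ ‖z‖) z = ‖z‖⁻¹ • z := by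
  rcases eq_or_ne z 0 with rfl | hz
  · rcases subsingleton_or_nontrivial E
    · exact Subsingleton.elim _ _
    · simp [gradient_eq_zero_of_not_differentiableAt (not_differentiableAt_norm_zero E)]
  · refine HasGradientAt.gradient (hasGradientAt_iff_hasFDerivAt.2 ?_)
    have hsqrt := (hasStrictFDerivAt_norm_sq z).hasFDerivAt.sqrt (by simpa using hz)
    simp only [sqrt_sq (norm_nonneg _)] at hsqrt
    refine hsqrt.congr_fderiv (ContinuousLinearMap.ext fun v ↦ ?_)
    simp
    ring

lemma tendsto_gradient_smoothNormPow_half (z : E) :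
    Tendsto (fun ε ↦ ∇ (smoothNormPow ε (1 / 2)) z) (𝓝[>] 0) (𝓝 (∇ (fun z : E ↦ ‖z‖) z)) := by
  have heq : (fun ε ↦ smoothNormPow ε (-(1 / 2)) z • z) =ᶠ[𝓝[>] 0]
      fun ε ↦ ∇ (smoothNormPow ε (1 / 2)) z := by
    filter_upwards [self_mem_nhdsWithin] with ε hε
    exact (gradient_smoothNormPow_half (ne_of_gt hε) z).symm
  refine Tendsto.congr' heq ?_
  rw [gradient_norm]
  rcases eq_or_ne z 0 with rfl | hz
  · simp
  · have hcont : ContinuousAt (fun ε : ℝ ↦ smoothNormPow ε (-(1 / 2)) z) 0 :=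
      ContinuousAt.rpow_const (by fun_prop) (.inl (by simpa using hz))
    have hzero : smoothNormPow 0 (-(1 / 2)) z = ‖z‖⁻¹ := by
      rw [smoothNormPow, zero_pow two_ne_zero, add_zero, rpow_neg (by positivity), ← sqrt_eq_rpow,
        sqrt_sq (norm_nonneg z)]
    exact ((hzero ▸ hcont.tendsto).mono_left nhdsWithin_le_nhds).smul_const z

end NormApproximation

section Biharmonic

variable {E : Type*} [NormedAddCommGroup E] [InnerProductSpace ℝ E] {ε m : ℝ}
  {k : ℕ} {f : E → ℝ}

/-- The constant `c` for which `Δ² ‖x‖ = -c δ₀` in dimension three (its value is `8 * π`). It is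
the total mass of `-Δ² √(1 + ‖x‖²)`. -/
noncomputable def biharmonicConst (E : Type*) [Norm E] [MeasureSpace E] : ℝ :=
  ∫ z : E, 15 * smoothNormPow 1 (-(7 / 2)) z

lemma hasGrowth_biharmonicConst_integrand (k : ℕ) :
    HasGrowth k (-7) fun z : E ↦ 15 * smoothNormPow 1 (-(7 / 2)) z :=
  ((hasGrowth_smoothNormPow_neg one_ne_zero (by norm_num) k).const_smul 15).mono le_rfl
    (by norm_num)

variable [FiniteDimensional ℝ E]

local instance : CompleteSpace E := FiniteDimensional.complete ℝ E

lemma laplacian_smoothNormPow_half (hE : finrank ℝ E = 3) (hε : ε ≠ 0) :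
    Δ (smoothNormPow ε (1 / 2) : E → ℝ) =
      (2 : ℝ) • smoothNormPow ε (-(1 / 2)) + ε ^ 2 • smoothNormPow ε (-(3 / 2)) := by
  rw [laplacian_smoothNormPow hε, hE]
  norm_num

lemma laplacian_laplacian_smoothNormPow_half (hE : finrank ℝ E = 3) (hε : ε ≠ 0) :
    Δ (Δ (smoothNormPow ε (1 / 2) : E → ℝ)) =
      (-15 * ε ^ 4) • smoothNormPow ε (-(7 / 2)) := by
  have hsmooth (s : ℝ) : ContDiff ℝ 2 (smoothNormPow ε s : E → ℝ) := contDiff_smoothNormPow hε s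
  have hsmul (c s : ℝ) : ContDiff ℝ 2 (c • smoothNormPow ε s : E → ℝ) := (hsmooth s).const_smul c
  ext1 z
  rw [laplacian_smoothNormPow_half hE hε,
    (hsmul _ _).contDiffAt.laplacian_add (hsmul _ _).contDiffAt,
    InnerProductSpace.laplacian_smul _ (hsmooth _).contDiffAt,
    InnerProductSpace.laplacian_smul _ (hsmooth _).contDiffAt, laplacian_smoothNormPow hε,
    laplacian_smoothNormPow hε, hE]
  norm_num
  ring

lemma hasGrowth_laplacian_smoothNormPow_half (hE : finrank ℝ E = 3) (hε : ε ≠ 0) :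
    HasGrowth k 0 (Δ (smoothNormPow ε (1 / 2) : E → ℝ)) := by
  rw [laplacian_smoothNormPow_half hE hε]
  refine HasGrowth.add ?_ ?_ <;>
  exact ((hasGrowth_smoothNormPow_neg hε (by norm_num) k).const_smul _).mono le_rfl (by norm_num)

variable [MeasurableSpace E] [BorelSpace E]

lemma biharmonicConst_pos (hE : finrank ℝ E = 3) : 0 < biharmonicConst E := by
  have hint : Integrable fun z : E ↦ 15 * smoothNormPow 1 (-(7 / 2)) z :=
    (hasGrowth_biharmonicConst_integrand 0).integrable (by rw [hE]; norm_num)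
  have hpos (z : E) : 0 < 15 * smoothNormPow 1 (-(7 / 2)) z := by
    rw [smoothNormPow]
    positivity
  refine (integral_pos_iff_support_of_nonneg (fun z ↦ (hpos z).le) hint).2 ?_
  rw [Function.support_eq_univ fun z ↦ (hpos z).ne']
  exact isOpen_univ.measure_pos _ Set.univ_nonempty

lemma tendsto_laplacian_laplacian_convolution (hE : finrank ℝ E = 3) (hf : HasGrowth k m f)
    (hm : m < -finrank ℝ E) (x : E) :
    Tendsto (fun ε ↦ (Δ (Δ (smoothNormPow ε (1 / 2) : E → ℝ)) ⋆ f) x) (𝓝[>] 0)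
      (𝓝 (-biharmonicConst E * f x)) := by
  have hconst := (biharmonicConst_pos hE).ne'
  let φ (z : E) : ℝ := (biharmonicConst E)⁻¹ * (15 * smoothNormPow 1 (-(7 / 2)) z)
  have hφ_nonneg (z : E) : 0 ≤ φ z := by
    have := (biharmonicConst_pos hE).le
    simp only [φ, smoothNormPow]
    positivity
  have hφ_integral : ∫ z, φ z = 1 := by
    rw [integral_const_mul, ← biharmonicConst, inv_mul_cancel₀ hconst]
  have hφ_decay : Tendsto (fun z ↦ ‖z‖ ^ finrank ℝ E * φ z) (Bornology.cobounded E) (𝓝 0) :=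
    ((hasGrowth_biharmonicConst_integrand 0).const_smul _).tendsto_norm_pow_mul
      (by rw [hE]; norm_num)
  have hpeak := (tendsto_integral_comp_smul_smul_of_integrable hφ_nonneg hφ_integral hφ_decay
    ((hf.integrable hm).comp_sub_left x) (by have := hf.continuous; fun_prop)).const_mul
      (-biharmonicConst E)
  rw [sub_zero] at hpeak
  refine (hpeak.comp tendsto_inv_nhdsGT_zero).congr' ?_
  filter_upwards [self_mem_nhdsWithin] with ε (hε : 0 < ε)
  rw [laplacian_laplacian_smoothNormPow_half hE hε.ne', convolution_def, Function.comp_apply,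
    ← integral_const_mul]
  refine integral_congr_ae (ae_of_all _ fun z ↦ ?_)
  have hscale := smoothNormPow_inv (inv_pos.2 hε) (-(7 / 2)) z
  rw [inv_inv, show (2 * -(-(7 / 2)) : ℝ) = (7 : ℕ) by norm_num, rpow_natCast] at hscale
  simp only [hE, φ, Pi.smul_apply, ContinuousLinearMap.lsmul_apply, smul_eq_mul, hscale]
  field_simp

lemma gradient_norm_convolution_gradient_laplacian (hE : finrank ℝ E = 3) (hf : HasGrowth 3 m f)
    (hm : m < -finrank ℝ E) (x : E) :
    (∇ (fun z : E ↦ ‖z‖) ⋆[innerSL ℝ] ∇ (Δ f)) x = -biharmonicConst E * f x := by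
  have hΔ : HasGrowth 1 m (Δ f) := hf.laplacian
  have hint : Integrable fun t ↦ ‖∇ (Δ f) (x - t)‖ :=
    ((hΔ.gradient.integrable hm).comp_sub_left x).norm
  have hlim : Tendsto (fun ε ↦ (∇ (smoothNormPow ε (1 / 2)) ⋆[innerSL ℝ] ∇ (Δ f)) x) (𝓝[>] 0)
      (𝓝 ((∇ (fun z : E ↦ ‖z‖) ⋆[innerSL ℝ] ∇ (Δ f)) x)) := by
    refine tendsto_integral_filter_of_dominated_convergence _ (Eventually.of_forall fun ε ↦ ?_)
      ?_ hint (ae_of_all _ fun t ↦ ?_)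
    · exact ((measurable_gradient _).inner
        (hΔ.gradient.continuous.measurable.comp (by fun_prop))).aestronglyMeasurable
    · filter_upwards [self_mem_nhdsWithin] with ε (hε : 0 < ε)
      refine ae_of_all _ fun t ↦ (norm_inner_le_norm _ _).trans ?_
      exact mul_le_of_le_one_left (norm_nonneg _) (norm_gradient_smoothNormPow_half_le hε.ne' t)
    · exact (tendsto_gradient_smoothNormPow_half t).inner tendsto_const_nhds
  refine tendsto_nhds_unique hlim
    ((tendsto_laplacian_laplacian_convolution hE hf hm x).congr' ?_)
  filter_upwards [self_mem_nhdsWithin] with ε (hε : 0 < ε)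
  rw [gradient_convolution_gradient_eq_laplacian_convolution (contDiff_smoothNormPow hε.ne' _)
    (hasGrowth_fderiv_smoothNormPow_half hε.ne') hΔ hm, convolution_laplacian_comm
    (hasGrowth_laplacian_smoothNormPow_half hE hε.ne') (hf.mono (by norm_num) le_rfl) hm]

lemma laplacian_laplacian_lipschitzPotential_norm (hE : finrank ℝ E = 3) (hf : HasGrowth 3 m f)
    (hm : m < -finrank ℝ E) (x : E) :
    Δ (Δ (lipschitzPotential volume (fun z : E ↦ ‖z‖) f)) x = -biharmonicConst E * f x := by
  rw [laplacian_laplacian_lipschitzPotential lipschitzWith_one_norm hf hm,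
    gradient_norm_convolution_gradient_laplacian hE hf hm]

end Biharmonic

section FixedPoint

open scoped BoundedContinuousFunction

variable {E : Type*} [NormedAddCommGroup E] [NormedSpace ℝ E] [FiniteDimensional ℝ E]
  [MeasurableSpace E] [BorelSpace E] {μ : Measure E} [μ.IsAddHaarMeasure]
  {φ f g h l P Q : E → ℝ} {C : ℝ≥0} {a κ q : ℝ}

/-- The potential of `f` divided by its maximal rate of growth `1 + ‖x‖`. It makes the bounded
continuous functions the natural space for the fixed point argument. -/
noncomputable def weightedPotential (hφ : LipschitzWith C φ) (hf : Integrable f μ) : E →ᵇ ℝ :=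
  .ofNormedAddCommGroup (fun x ↦ lipschitzPotential μ φ f x / (1 + ‖x‖))
    ((differentiable_lipschitzPotential hφ hf).continuous.div (by fun_prop) fun x ↦ by positivity)
    (C * ∫ y, |f y| ∂μ) (abs_lipschitzPotential_div_le hφ hf)

lemma weightedPotential_apply (hφ : LipschitzWith C φ) (hf : Integrable f μ) (x : E) :
    weightedPotential hφ hf x = lipschitzPotential μ φ f x / (1 + ‖x‖) := rfl

lemma dist_weightedPotential_le (hφ : LipschitzWith C φ) (hf : Integrable f μ)
    (hg : Integrable g μ) :
    dist (weightedPotential hφ hf) (weightedPotential hφ hg) ≤ C * ∫ y, |f y - g y| ∂μ := by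
  refine (BoundedContinuousFunction.dist_le (by positivity)).2 fun x ↦ ?_
  rw [Real.dist_eq, weightedPotential_apply, weightedPotential_apply, ← sub_div,
    ← lipschitzPotential_sub hφ hf hg]
  exact abs_lipschitzPotential_div_le hφ (hf.sub hg) x

lemma exists_eq_add_lipschitzPotential {F : E → ℝ → ℝ} (hφ : LipschitzWith C φ)
    (hP : Continuous P) (hF : Continuous (Function.uncurry F)) (hg : Integrable g μ)
    (hFg : ∀ x s, |F x s| ≤ g x) (hh : Integrable h μ)
    (hFh : ∀ x s t, (1 + ‖x‖) * |F x s - F x t| ≤ h x * |s - t|) (hC : C * ∫ x, h x ∂μ < 1) :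
    ∃ u, Continuous u ∧ ∀ x, u x = P x + lipschitzPotential μ φ (fun y ↦ F y (u y)) x := by
  let U (w : E →ᵇ ℝ) (x : E) : ℝ := P x + (1 + ‖x‖) * w x
  have hU (w) : Continuous (U w) := by
    have := w.continuous
    fun_prop
  have hFU (w) : Integrable (fun x ↦ F x (U w x)) μ :=
    hg.mono' (hF.comp (continuous_id.prodMk (hU w))).aestronglyMeasurable
      (ae_of_all _ fun x ↦ hFg x _)
  let T (w : E →ᵇ ℝ) : E →ᵇ ℝ := weightedPotential hφ (hFU w)
  have hh0 (x : E) : 0 ≤ h x := by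
    have : 0 ≤ (1 + ‖x‖) * |F x 1 - F x 0| := by positivity
    simpa using this.trans (hFh x 1 0)
  let K : ℝ≥0 := ⟨C * ∫ x, h x ∂μ, mul_nonneg C.coe_nonneg (integral_nonneg hh0)⟩
  have hdist (w w' : E →ᵇ ℝ) (x : E) : |F x (U w x) - F x (U w' x)| ≤ h x * dist w w' := by
    have hx : 0 < 1 + ‖x‖ := by positivity
    refine le_of_mul_le_mul_left ((hFh x _ _).trans ?_) hx
    rw [add_sub_add_left_eq_sub, ← mul_sub, abs_mul, abs_of_pos hx, mul_left_comm,
      ← Real.dist_eq (w x)]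
    gcongr
    · exact hh0 x
    · exact BoundedContinuousFunction.dist_coe_le_dist x
  have hT : ContractingWith K T := by
    refine ⟨hC, LipschitzWith.of_dist_le_mul fun w w' ↦ ?_⟩
    refine (dist_weightedPotential_le hφ (hFU w) (hFU w')).trans ?_
    change _ ≤ C * (∫ x, h x ∂μ) * dist w w'
    rw [mul_assoc, ← integral_mul_const]
    exact mul_le_mul_of_nonneg_left
      (integral_mono ((hFU w).sub (hFU w')).abs (hh.mul_const _) (hdist w w')) C.coe_nonneg
  have hfix : T hT.fixedPoint = hT.fixedPoint := hT.fixedPoint_isFixedPt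
  refine ⟨U hT.fixedPoint, hU _, fun x ↦ ?_⟩
  have hx := DFunLike.congr_fun hfix x
  rw [weightedPotential_apply, div_eq_iff (by positivity), mul_comm] at hx
  rw [hx]

lemma abs_rpow_neg_sub_le {l s t : ℝ} (hl : 0 < l) (hq : 0 ≤ q) (hs : l ≤ s) (ht : l ≤ t) :
    |s ^ (-q) - t ^ (-q)| ≤ q * l ^ (-q - 1) * |s - t| := by
  have hderiv (x : ℝ) (hx : l ≤ x) :
      HasDerivWithinAt (fun x : ℝ ↦ x ^ (-q)) (-q * x ^ (-q - 1)) (Set.Ici l) x :=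
    (hasDerivAt_rpow_const (.inl (hl.trans_le hx).ne')).hasDerivWithinAt
  have hbound (x : ℝ) (hx : l ≤ x) : ‖-q * x ^ (-q - 1)‖ ≤ q * l ^ (-q - 1) := by
    rw [norm_mul, norm_neg, norm_of_nonneg hq, norm_of_nonneg (rpow_nonneg (hl.le.trans hx) _)]
    exact mul_le_mul_of_nonneg_left (rpow_le_rpow_of_nonpos hl hx (by linarith)) hq
  simpa only [Real.norm_eq_abs] using
    (convex_Ici l).norm_image_sub_le_of_norm_hasDerivWithin_le hderiv hbound ht hs

lemma mul_abs_max_rpow_neg_sub_le {l r : ℝ} (hr : 0 < r) (hl : r ≤ l) (hq : 0 ≤ q) (s t : ℝ) :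
    r * |max l s ^ (-q) - max l t ^ (-q)| ≤ q * l ^ (-q) * |s - t| := by
  have hl0 : 0 < l := hr.trans_le hl
  have hmax : |max l s - max l t| ≤ |s - t| := by
    simpa using abs_max_sub_max_le_max l s l t
  calc r * |max l s ^ (-q) - max l t ^ (-q)|
      ≤ l * (q * l ^ (-q - 1) * |max l s - max l t|) := by
        gcongr
        exact abs_rpow_neg_sub_le hl0 hq (le_max_left _ _) (le_max_left _ _)
    _ ≤ l * (q * l ^ (-q - 1) * |s - t|) := by gcongr
    _ = q * l ^ (-q) * |s - t| := by
        rw [rpow_sub_one hl0.ne']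
        field_simp

lemma exists_eq_add_lipschitzPotential_max_rpow_neg (hφ : LipschitzWith C φ)
    (hP : Continuous P) (hl : Continuous l) (hle : ∀ x, 1 + ‖x‖ ≤ l x) (hq : 0 ≤ q) (ha : 0 ≤ a)
    (hint : Integrable (fun x ↦ l x ^ (-q)) μ)
    (hsmall : C * (a * (q * ∫ x, l x ^ (-q) ∂μ)) < 1) :
    ∃ u, Continuous u ∧
      ∀ x, u x = P x + lipschitzPotential μ φ (fun y ↦ a * max (l y) (u y) ^ (-q)) x := by
  have hpos (x : E) : 0 < l x := (hle x).trans_lt' (by positivity)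
  rw [← integral_const_mul, ← integral_const_mul] at hsmall
  refine exists_eq_add_lipschitzPotential (F := fun x s ↦ a * max (l x) s ^ (-q)) hφ hP ?_
    (hint.const_mul a) (fun x s ↦ ?_) ((hint.const_mul q).const_mul a) (fun x s t ↦ ?_) hsmall
  · refine continuous_const.mul (Continuous.rpow_const (by fun_prop) fun x ↦ .inl ?_)
    exact (lt_max_of_lt_left (hpos x.1)).ne'
  · rw [abs_mul, abs_of_nonneg ha, abs_of_pos (rpow_pos_of_pos (lt_max_of_lt_left (hpos x)) _)]
    exact mul_le_mul_of_nonneg_left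
      (rpow_le_rpow_of_nonpos (hpos x) (le_max_left _ _) (neg_nonpos.2 hq)) ha
  · rw [← mul_sub, abs_mul, abs_of_nonneg ha, mul_left_comm, mul_assoc]
    exact mul_le_mul_of_nonneg_left
      (mul_abs_max_rpow_neg_sub_le (by positivity) (hle x) hq s t) ha

lemma exists_eq_add_lipschitzPotential_rpow_neg (hφ : LipschitzWith C φ) (hP : Continuous P)
    (hl : Continuous l) (hle : ∀ x, 1 + ‖x‖ ≤ l x) (hlP : ∀ x, l x + ‖x‖ ≤ P x) (hq : 0 ≤ q)
    (ha : 0 ≤ a) (hint : Integrable (fun x ↦ l x ^ (-q)) μ)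
    (hsmall : C * (a * (1 + q) * ∫ x, l x ^ (-q) ∂μ) < 1) :
    ∃ u, Continuous u ∧ (∀ x, l x ≤ u x) ∧ (∀ x, |u x - P x| ≤ ‖x‖) ∧
      ∀ x, u x = P x + lipschitzPotential μ φ (fun y ↦ a * u y ^ (-q)) x := by
  have hpos (x : E) : 0 < l x := (hle x).trans_lt' (by positivity)
  set I := ∫ x, l x ^ (-q) ∂μ with hI
  have hI0 : 0 ≤ I := integral_nonneg fun x ↦ rpow_nonneg (hpos x).le _
  have hmass : C * (a * I) ≤ 1 ∧ C * (a * (q * I)) < 1 := by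
    have h₁ : 0 ≤ C * (a * I) := by positivity
    have h₂ : 0 ≤ C * (a * (q * I)) := by positivity
    constructor <;> linarith
  obtain ⟨u, hu, hfix⟩ :=
    exists_eq_add_lipschitzPotential_max_rpow_neg hφ hP hl hle hq ha hint hmass.2
  let f (x : E) : ℝ := a * max (l x) (u x) ^ (-q)
  have hmax (x : E) : 0 < max (l x) (u x) := lt_max_of_lt_left (hpos x)
  have hfle (x : E) : |f x| ≤ a * l x ^ (-q) := by
    rw [abs_of_nonneg (mul_nonneg ha (rpow_nonneg (hmax x).le _))]
    exact mul_le_mul_of_nonneg_left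
      (rpow_le_rpow_of_nonpos (hpos x) (le_max_left _ _) (neg_nonpos.2 hq)) ha
  have hf : Integrable f μ := (hint.const_mul a).mono' (continuous_const.mul
    ((hl.max hu).rpow_const fun x ↦ .inl (hmax x).ne')).aestronglyMeasurable (ae_of_all _ hfle)
  have hdist (x : E) : |u x - P x| ≤ ‖x‖ := by
    have hfI : ∫ y, |f y| ∂μ ≤ a * I := by
      rw [hI, ← integral_const_mul]
      exact integral_mono hf.abs (hint.const_mul a) hfle
    rw [hfix x, add_sub_cancel_left]
    refine (abs_lipschitzPotential_le hφ hf x).trans ?_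
    rw [mul_right_comm]
    exact mul_le_of_le_one_left (norm_nonneg x)
      ((mul_le_mul_of_nonneg_left hfI C.coe_nonneg).trans hmass.1)
  have hlower (x : E) : l x ≤ u x := by linarith [(abs_le.1 (hdist x)).1, hlP x]
  refine ⟨u, hu, hlower, hdist, fun x ↦ ?_⟩
  simpa only [max_eq_right (hlower _)] using hfix x

lemma tendsto_integral_add_rpow_neg {α : Type*} [MeasurableSpace α] {μ : Measure α} {l : α → ℝ}
    (hl : ∀ x, 0 < l x) (hmeas : AEMeasurable l μ) (hq : 0 < q)
    (hint : Integrable (fun x ↦ l x ^ (-q)) μ) :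
    Tendsto (fun N : ℝ ↦ ∫ x, (N + l x) ^ (-q) ∂μ) atTop (𝓝 0) := by
  rw [← integral_zero α ℝ (μ := μ)]
  refine tendsto_integral_filter_of_dominated_convergence _ (Eventually.of_forall fun N ↦ ?_) ?_
    hint (ae_of_all _ fun x ↦ ?_)
  · exact ((hmeas.const_add N).pow_const _).aestronglyMeasurable
  · filter_upwards [eventually_ge_atTop 0] with N hN
    refine ae_of_all _ fun x ↦ ?_
    rw [norm_of_nonneg (rpow_nonneg (add_nonneg hN (hl x).le) _)]
    exact rpow_le_rpow_of_nonpos (hl x) (by linarith) (by linarith)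
  · exact (tendsto_rpow_neg_atTop hq).comp (tendsto_atTop_add_const_right _ _ tendsto_id)

lemma one_add_le_half_add {N r s : ℝ} (hκ : 0 < κ) (hN : κ + 2 + κ⁻¹ ≤ N) (hs : κ * r ^ 2 ≤ s) :
    1 + r ≤ (N + s) / 2 := by
  have hsq : κ * r ^ 2 + κ⁻¹ - 2 * r = κ * (r - κ⁻¹) ^ 2 := by
    field_simp
    ring
  linarith [mul_nonneg hκ.le (sq_nonneg (r - κ⁻¹))]

lemma mul_one_add_rpow_two_le_half_add {N r s : ℝ} (hκ : 0 < κ) (hN : κ + 2 + κ⁻¹ ≤ N)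
    (hs : κ * r ^ 2 ≤ s) : κ / 4 * (1 + r) ^ (2 : ℝ) ≤ (N + s) / 2 := by
  rw [rpow_two]
  linarith [mul_nonneg hκ.le (sq_nonneg (r - 1)), inv_pos.2 hκ]

lemma exists_eq_const_add_lipschitzPotential_rpow_neg (hφ : LipschitzWith C φ)
    (hQ : Continuous Q) (hκ : 0 < κ) (hQκ : ∀ x, κ * ‖x‖ ^ 2 ≤ Q x)
    (hq : (finrank ℝ E : ℝ) < 2 * q) (ha : 0 ≤ a) :
    ∃ (N : ℝ) (u : E → ℝ), Continuous u ∧ (∀ x, κ / 4 * (1 + ‖x‖) ^ (2 : ℝ) ≤ u x) ∧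
      (∀ x, |u x - (N + Q x)| ≤ ‖x‖) ∧
      ∀ x, u x = N + Q x + lipschitzPotential μ φ (fun y ↦ a * u y ^ (-q)) x := by
  have hq0 : 0 < q := by linarith [(finrank ℝ E).cast_nonneg (α := ℝ)]
  have hint {N : ℝ} (hN : κ + 2 + κ⁻¹ ≤ N) :
      Integrable (fun x ↦ ((N + Q x) / 2) ^ (-q)) μ :=
    (HasGrowth.zero_rpow_neg (by positivity) hq0.le
      (fun x ↦ mul_one_add_rpow_two_le_half_add hκ hN (hQκ x)) (by fun_prop)).integrable
      (by linarith)
  obtain ⟨M, hM, hM0⟩ : ∃ M : ℝ, C * (a * (1 + q) *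
      ∫ x, (M + (κ + 2 + κ⁻¹ + Q x) / 2) ^ (-q) ∂μ) < 1 ∧ 0 ≤ M := by
    have hl (x : E) : 0 < (κ + 2 + κ⁻¹ + Q x) / 2 :=
      (one_add_le_half_add hκ le_rfl (hQκ x)).trans_lt' (by positivity)
    have hlim := ((tendsto_integral_add_rpow_neg hl (by fun_prop) hq0 (hint le_rfl)).const_mul
      (a * (1 + q))).const_mul (C : ℝ)
    rw [mul_zero, mul_zero] at hlim
    exact ((hlim.eventually_lt_const one_pos).and (eventually_ge_atTop 0)).exists
  let N := κ + 2 + κ⁻¹ + 2 * M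
  have hN : κ + 2 + κ⁻¹ ≤ N := by linarith
  have hMN (x : E) : M + (κ + 2 + κ⁻¹ + Q x) / 2 = (N + Q x) / 2 := by ring
  simp only [hMN] at hM
  have hle (x : E) : 1 + ‖x‖ ≤ (N + Q x) / 2 := one_add_le_half_add hκ hN (hQκ x)
  obtain ⟨u, hu, hlu, hdist, hfix⟩ := exists_eq_add_lipschitzPotential_rpow_neg
    (P := fun x ↦ N + Q x) hφ (by fun_prop) (by fun_prop) hle (fun x ↦ by linarith [hle x])
    hq0.le ha (hint hN) hM
  exact ⟨N, u, hu, fun x ↦ (mul_one_add_rpow_two_le_half_add hκ hN (hQκ x)).trans (hlu x),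
    hdist, hfix⟩

end FixedPoint

section QuadraticForm

variable {E : Type*} [NormedAddCommGroup E] [NormedSpace ℝ E]

lemma hasFDerivAt_const_add_apply_self (N : ℝ) (B : E →L[ℝ] E →L[ℝ] ℝ) (x : E) :
    HasFDerivAt (fun x ↦ N + B x x) ((B + B.flip) x) x := by
  refine ((B.hasFDerivAt.clm_apply (hasFDerivAt_id x)).const_add N).congr_fderiv ?_
  ext v
  simp

lemma fderiv_const_add_apply_self (N : ℝ) (B : E →L[ℝ] E →L[ℝ] ℝ) :
    fderiv ℝ (fun x ↦ N + B x x) = ⇑(B + B.flip) :=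
  funext fun x ↦ (hasFDerivAt_const_add_apply_self N B x).fderiv

end QuadraticForm

section SingularEquation

variable {E : Type*} [NormedAddCommGroup E] [InnerProductSpace ℝ E] [FiniteDimensional ℝ E]

lemma laplacian_laplacian_const_add_apply_self (N : ℝ) (B : E →L[ℝ] E →L[ℝ] ℝ) :
    Δ (Δ fun x ↦ N + B x x) = 0 := by
  rw [laplacian_of_fderiv_eq (stdOrthonormalBasis ℝ E) (fderiv_const_add_apply_self N B),
    InnerProductSpace.laplacian_const]

variable [MeasurableSpace E] [BorelSpace E] {φ f u P : E → ℝ} {C : ℝ≥0} {a b m κ q : ℝ}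

lemma hasGrowth_rpow_neg_of_eq_add_lipschitzPotential (hφ : LipschitzWith C φ) (hb : 0 < b)
    (hq : (finrank ℝ E : ℝ) < 2 * q) (hub : ∀ x, b * (1 + ‖x‖) ^ (2 : ℝ) ≤ u x)
    (hu : Continuous u) (hP : Differentiable ℝ P) (hP' : ∀ k, HasGrowth k 1 (fderiv ℝ P))
    (hfix : u = P + lipschitzPotential volume φ fun y ↦ a * u y ^ (-q)) (k : ℕ) :
    HasGrowth k (2 * -q) fun x ↦ u x ^ (-q) := by
  have hq0 : 0 ≤ q := by linarith [(finrank ℝ E).cast_nonneg (α := ℝ)]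
  induction k with
  | zero => exact .zero_rpow_neg hb hq0 hub hu
  | succ k ih =>
    have hm : 2 * -q < -finrank ℝ E := by linarith
    have hf : HasGrowth k (2 * -q) fun y ↦ a * u y ^ (-q) := ih.const_smul a
    have hV := differentiable_lipschitzPotential hφ (hf.integrable (μ := volume) hm)
    have hfderiv : fderiv ℝ u =
        fderiv ℝ P + fderiv ℝ (lipschitzPotential volume φ fun y ↦ a * u y ^ (-q)) := by
      conv_lhs => rw [hfix]
      exact funext fun x ↦ fderiv_add (hP x) (hV x)
    refine .succ_rpow_neg hb hq0 hub (hfix ▸ hP.add hV) ?_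
    rw [hfderiv]
    exact ((hP' k).mono le_rfl (by norm_num)).add
      ((hasGrowth_fderiv_lipschitzPotential hφ hf hm).mono le_rfl (by norm_num))

lemma laplacian_laplacian_add_lipschitzPotential_norm (hE : finrank ℝ E = 3)
    (hP : ContDiff ℝ 4 P) (hf : HasGrowth 3 m f) (hm : m < -finrank ℝ E) (x : E) :
    Δ (Δ (P + lipschitzPotential volume (fun z : E ↦ ‖z‖) f)) x =
      Δ (Δ P) x - biharmonicConst E * f x := by
  have hV : ContDiff ℝ 4 (lipschitzPotential volume (fun z : E ↦ ‖z‖) f) :=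
    contDiff_lipschitzPotential lipschitzWith_one_norm hf hm
  have hΔ : Δ (P + lipschitzPotential volume (fun z : E ↦ ‖z‖) f) =
      Δ P + Δ (lipschitzPotential volume (fun z : E ↦ ‖z‖) f) := funext fun x ↦
    (hP.of_le (by norm_num)).contDiffAt.laplacian_add (hV.of_le (by norm_num)).contDiffAt
  rw [hΔ, (contDiff_laplacian hP).contDiffAt.laplacian_add (contDiff_laplacian hV).contDiffAt,
    laplacian_laplacian_lipschitzPotential_norm hE hf hm, neg_mul, sub_eq_add_neg]

lemma exists_solution_abs_sub_le_norm (hE : finrank ℝ E = 3) {B : E →L[ℝ] E →L[ℝ] ℝ}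
    (hκ : 0 < κ) (hB : ∀ x, κ * ‖x‖ ^ 2 ≤ B x x) (hq : 3 / 2 < q) :
    ∃ (N : ℝ) (u : E → ℝ), ContDiff ℝ 4 u ∧ (∀ x, 0 < u x) ∧
      (∀ x, Δ (Δ u) x + u x ^ (-q) = 0) ∧ (∀ x, |u x - (N + B x x)| ≤ ‖x‖) ∧
      Integrable fun x ↦ u x ^ (-q) := by
  have hc := biharmonicConst_pos hE
  have hdim : (finrank ℝ E : ℝ) < 2 * q := by
    rw [hE]
    norm_num
    linarith
  obtain ⟨N, u, hu, hub, hdist, hfix⟩ := exists_eq_const_add_lipschitzPotential_rpow_neg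
    (μ := volume) lipschitzWith_one_norm (Q := fun x ↦ B x x) (by fun_prop) hκ hB hdim
    (inv_nonneg.2 hc.le)
  let P (x : E) : ℝ := N + B x x
  have hP : ContDiff ℝ 4 P := contDiff_const.add (B.contDiff.clm_apply contDiff_id)
  have hP' : fderiv ℝ P = ⇑(B + B.flip) := fderiv_const_add_apply_self N B
  have hufix : u = P + lipschitzPotential volume (fun z : E ↦ ‖z‖)
      fun y ↦ (biharmonicConst E)⁻¹ * u y ^ (-q) := funext hfix
  have hgrowth (k : ℕ) : HasGrowth k (2 * -q) fun x ↦ u x ^ (-q) :=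
    hasGrowth_rpow_neg_of_eq_add_lipschitzPotential lipschitzWith_one_norm (by positivity) hdim
      hub hu (hP.differentiable (by norm_num)) (fun k ↦ hP' ▸ .clm _) hufix k
  have hm : 2 * -q < -finrank ℝ E := by linarith
  have hf : HasGrowth 3 (2 * -q) fun y ↦ (biharmonicConst E)⁻¹ * u y ^ (-q) :=
    (hgrowth 3).const_smul _
  refine ⟨N, u, ?_, fun x ↦ (hub x).trans_lt' (by positivity), fun x ↦ ?_, hdist,
    (hgrowth 0).integrable hm⟩
  · rw [hufix]
    exact hP.add (contDiff_lipschitzPotential lipschitzWith_one_norm hf hm)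
  · have hΔu := laplacian_laplacian_add_lipschitzPotential_norm hE hP hf hm x
    rw [← hufix, laplacian_laplacian_const_add_apply_self, Pi.zero_apply,
      mul_inv_cancel_left₀ hc.ne'] at hΔu
    linarith

end SingularEquation

section QuadraticAsymptotics

lemma liminf_eq_of_tendsto_of_eventuallyLE {α β : Type*} [ConditionallyCompleteLinearOrder β]
    [TopologicalSpace β] [OrderTopology β] {l l' : Filter α} [l'.NeBot] {f g : α → β} {c : β}
    (hl : l' ≤ l) (hf : Tendsto f l' (𝓝 c)) (hg : Tendsto g l (𝓝 c)) (hgf : g ≤ᶠ[l] f) :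
    liminf f l = c := by
  have : l.NeBot := .mono ‹_› hl
  have hbdd : IsBoundedUnder (· ≥ ·) l f := hg.isBoundedUnder_ge.mono_ge hgf
  have hcobdd : IsCoboundedUnder (· ≥ ·) l f := hf.isCoboundedUnder_ge.mono (map_mono hl)
  refine le_antisymm ?_ ?_
  · exact (liminf_le_liminf_of_le hl hbdd hf.isCoboundedUnder_ge).trans_eq hf.liminf_eq
  · exact hg.liminf_eq.symm.trans_le (liminf_le_liminf hgf hg.isBoundedUnder_ge hcobdd)

lemma limsup_eq_of_tendsto_of_eventuallyLE {α β : Type*} [ConditionallyCompleteLinearOrder β]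
    [TopologicalSpace β] [OrderTopology β] {l l' : Filter α} [l'.NeBot] {f g : α → β} {c : β}
    (hl : l' ≤ l) (hf : Tendsto f l' (𝓝 c)) (hg : Tendsto g l (𝓝 c)) (hfg : f ≤ᶠ[l] g) :
    limsup f l = c :=
  liminf_eq_of_tendsto_of_eventuallyLE (β := βᵒᵈ) hl hf hg hfg

variable {E : Type*} [NormedAddCommGroup E] [ProperSpace E] {u : E → ℝ}

lemma isLittleO_norm_sq_of_abs_sub_le {N : ℝ} {Q : E → ℝ} (hu : ∀ x, |u x - (N + Q x)| ≤ ‖x‖) :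
    (fun x ↦ u x - Q x) =o[cocompact E] fun x ↦ ‖x‖ ^ 2 := by
  have hnorm : Tendsto (‖·‖) (cocompact E) atTop := tendsto_norm_cocompact_atTop
  have hN : (fun _ ↦ N) =o[cocompact E] fun x ↦ ‖x‖ ^ 2 :=
    (isLittleO_const_left.2 (.inr (by
      simpa [Function.comp_def] using (tendsto_pow_atTop two_ne_zero).comp hnorm)))
  have hsub : (fun x ↦ u x - (N + Q x)) =o[cocompact E] fun x ↦ ‖x‖ ^ 2 :=
    (isBigO_of_le _ fun x ↦ by simpa using hu x).trans_isLittleO (g := fun x ↦ ‖x‖) (by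
      simpa [Function.comp_def] using (isLittleO_pow_pow_atTop_of_lt one_lt_two).comp_tendsto hnorm)
  exact (hsub.add hN).congr_left fun x ↦ by ring

variable [NormedSpace ℝ E] {B : E →L[ℝ] E →L[ℝ] ℝ} {e e' : E}

lemma tendsto_add_smul_cocompact (p : E) (he : e ≠ 0) :
    Tendsto (fun R : ℝ ↦ p + R • e) atTop (cocompact E) := by
  rw [← Metric.cobounded_eq_cocompact]
  refine (tendsto_const_add_cobounded p).comp (tendsto_norm_atTop_iff_cobounded.1 ?_)
  simpa only [norm_smul, Real.norm_eq_abs] using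
    tendsto_abs_atTop_atTop.atTop_mul_const (norm_pos_iff.2 he)

lemma tendsto_add_smul_div_sq (hu : (fun x ↦ u x - B x x) =o[cocompact E] fun x ↦ ‖x‖ ^ 2)
    (he : e ≠ 0) (p : E) :
    Tendsto (fun R : ℝ ↦ u (p + R • e) / R ^ 2) atTop (𝓝 (B e e)) := by
  have hray : (fun R : ℝ ↦ p + R • e) =O[atTop] fun R ↦ R :=
    ((isLittleO_const_id_atTop p).isBigO).add
      (.of_bound ‖e‖ (Eventually.of_forall fun R ↦ by
        rw [norm_smul, mul_comm, id]))
  have hsub : Tendsto (fun R : ℝ ↦ (u (p + R • e) - B (p + R • e) (p + R • e)) / R ^ 2) atTop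
      (𝓝 0) :=
    ((hu.comp_tendsto (tendsto_add_smul_cocompact p he)).trans_isBigO
      (hray.norm_left.pow 2)).tendsto_div_nhds_zero
  have hdir : Tendsto (fun R : ℝ ↦ R⁻¹ • p + e) atTop (𝓝 e) := by
    simpa only [zero_smul, zero_add] using
      ((tendsto_inv_atTop_zero (𝕜 := ℝ)).smul_const p).add_const e
  have hB : Tendsto (fun R : ℝ ↦ B (R⁻¹ • p + e) (R⁻¹ • p + e)) atTop (𝓝 (B e e)) :=
    ((by fun_prop : Continuous fun x ↦ B x x).tendsto e).comp hdir
  rw [← zero_add (B e e)]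
  refine (hsub.add hB).congr' ?_
  filter_upwards [eventually_ne_atTop 0] with R hR
  have hscale : p + R • e = R • (R⁻¹ • p + e) := by rw [smul_add, smul_inv_smul₀ hR]
  rw [hscale]
  simp only [map_smul, smul_apply, smul_eq_mul]
  field_simp
  ring

lemma not_radial_of_isLittleO (hu : (fun x ↦ u x - B x x) =o[cocompact E] fun x ↦ ‖x‖ ^ 2)
    (he : e ≠ 0) (hnorm : ‖e‖ = ‖e'‖) (hne : B e e ≠ B e' e') :
    ¬ ∃ p, ∀ x y, ‖x - p‖ = ‖y - p‖ → u x = u y := by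
  rintro ⟨p, hp⟩
  have he' : e' ≠ 0 := norm_ne_zero_iff.1 (hnorm ▸ norm_ne_zero_iff.2 he)
  refine hne (tendsto_nhds_unique (tendsto_add_smul_div_sq hu he p) ?_)
  have hray (R : ℝ) : u (p + R • e) = u (p + R • e') :=
    hp _ _ (by simp only [add_sub_cancel_left, norm_smul, hnorm])
  simpa only [hray] using tendsto_add_smul_div_sq hu he' p

lemma tendsto_smul_div_norm_sq (hu : (fun x ↦ u x - B x x) =o[cocompact E] fun x ↦ ‖x‖ ^ 2)
    (he : ‖e‖ = 1) :
    Tendsto (fun x ↦ u x / ‖x‖ ^ 2) (map (fun R : ℝ ↦ R • e) atTop) (𝓝 (B e e)) := by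
  have he0 : e ≠ 0 := norm_ne_zero_iff.1 (he ▸ one_ne_zero)
  simpa [tendsto_map'_iff, Function.comp_def, norm_smul, he] using
    tendsto_add_smul_div_sq hu he0 0

lemma map_smul_atTop_le_cocompact (he : e ≠ 0) :
    map (fun R : ℝ ↦ R • e) atTop ≤ cocompact E := by
  simpa [Tendsto] using tendsto_add_smul_cocompact 0 he

lemma liminf_div_norm_sq_eq (hu : (fun x ↦ u x - B x x) =o[cocompact E] fun x ↦ ‖x‖ ^ 2)
    (he : ‖e‖ = 1) (hle : ∀ x, B e e * ‖x‖ ^ 2 ≤ B x x) :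
    liminf (fun x ↦ u x / ‖x‖ ^ 2) (cocompact E) = B e e := by
  refine liminf_eq_of_tendsto_of_eventuallyLE
    (map_smul_atTop_le_cocompact (norm_ne_zero_iff.1 (he ▸ one_ne_zero)))
    (tendsto_smul_div_norm_sq hu he)
    (by simpa using hu.tendsto_div_nhds_zero.const_add (B e e)) ?_
  filter_upwards [tendsto_norm_cocompact_atTop.eventually_gt_atTop 0] with x hx
  have hquot : B e e ≤ B x x / ‖x‖ ^ 2 := (le_div_iff₀ (pow_pos hx 2)).2 (hle x)
  rw [sub_div]
  linarith

lemma limsup_div_norm_sq_eq (hu : (fun x ↦ u x - B x x) =o[cocompact E] fun x ↦ ‖x‖ ^ 2)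
    (he : ‖e‖ = 1) (hle : ∀ x, B x x ≤ B e e * ‖x‖ ^ 2) :
    limsup (fun x ↦ u x / ‖x‖ ^ 2) (cocompact E) = B e e := by
  refine limsup_eq_of_tendsto_of_eventuallyLE
    (map_smul_atTop_le_cocompact (norm_ne_zero_iff.1 (he ▸ one_ne_zero)))
    (tendsto_smul_div_norm_sq hu he)
    (by simpa using hu.tendsto_div_nhds_zero.const_add (B e e)) ?_
  filter_upwards [tendsto_norm_cocompact_atTop.eventually_gt_atTop 0] with x hx
  have hquot : B x x / ‖x‖ ^ 2 ≤ B e e := (div_le_iff₀ (pow_pos hx 2)).2 (hle x)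
  rw [sub_div]
  linarith

end QuadraticAsymptotics

section AxialForm

variable {E : Type*} [NormedAddCommGroup E] [InnerProductSpace ℝ E] {e e' : E} {κ₁ κ₂ : ℝ}

/-- The bilinear form with eigenvalue `κ₁` along the unit vector `e` and `κ₂` on its orthogonal
complement; its quadratic form is the growth profile of the non-radial solution. -/
noncomputable def axialForm (e : E) (κ₁ κ₂ : ℝ) : E →L[ℝ] E →L[ℝ] ℝ :=
  let I : E →L[ℝ] E →L[ℝ] ℝ := innerSL ℝ
  κ₂ • I - (κ₂ - κ₁) • (I e).smulRight (I e)

lemma axialForm_apply_self (x : E) :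
    axialForm e κ₁ κ₂ x x = κ₂ * ‖x‖ ^ 2 - (κ₂ - κ₁) * inner ℝ e x ^ 2 := by
  change κ₂ * inner ℝ x x - (κ₂ - κ₁) * (inner ℝ e x * inner ℝ e x) = _
  rw [real_inner_self_eq_norm_sq, ← sq]

lemma axialForm_apply_axis (he : ‖e‖ = 1) : axialForm e κ₁ κ₂ e e = κ₁ := by
  simp [axialForm_apply_self, he]

lemma axialForm_apply_of_inner_eq_zero (he' : ‖e'‖ = 1) (hee' : inner ℝ e e' = 0) :
    axialForm e κ₁ κ₂ e' e' = κ₂ := by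
  simp [axialForm_apply_self, he', hee']

lemma le_axialForm_apply_self (he : ‖e‖ = 1) (hκ : κ₁ ≤ κ₂) (x : E) :
    κ₁ * ‖x‖ ^ 2 ≤ axialForm e κ₁ κ₂ x x := by
  have hinner : inner ℝ e x ^ 2 ≤ ‖x‖ ^ 2 :=
    sq_le_sq' (by simpa [he] using neg_le_of_abs_le (abs_real_inner_le_norm e x))
      (by simpa [he] using real_inner_le_norm e x)
  rw [axialForm_apply_self]
  linarith [mul_le_mul_of_nonneg_left hinner (sub_nonneg.2 hκ)]

lemma axialForm_apply_self_le (hκ : κ₁ ≤ κ₂) (x : E) :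
    axialForm e κ₁ κ₂ x x ≤ κ₂ * ‖x‖ ^ 2 := by
  rw [axialForm_apply_self]
  exact sub_le_self _ (mul_nonneg (sub_nonneg.2 hκ) (sq_nonneg _))

end AxialForm

lemma laplacian_eq_innerProductSpace_laplacian (u : EuclideanSpace ℝ (Fin 3) → ℝ) :
    laplacian u = Δ u := by
  rw [InnerProductSpace.laplacian_eq_iteratedFDeriv_orthonormalBasis u
    (EuclideanSpace.basisFun (Fin 3) ℝ)]
  simp only [EuclideanSpace.basisFun_apply]
  rfl

/-- **Theorem.** For `q > 3/2` and `0 < κ₁ < κ₂` there exists a positive `C⁴` solution of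
`Δ²u + u^{-q} = 0` on ℝ³, not radially symmetric about any point, with
`liminf_{|x|→∞} u(x)/|x|² = κ₁`, `limsup_{|x|→∞} u(x)/|x|² = κ₂`, and `∫ u^{-q} < ∞`. -/
theorem exists_nonradial_solution_quadratic_growth_finite_mass
    (q κ₁ κ₂ : ℝ) (hq : 3 / 2 < q) (hκ₁ : 0 < κ₁) (hκ : κ₁ < κ₂) :
    ∃ u : EuclideanSpace ℝ (Fin 3) → ℝ,
      ContDiff ℝ 4 u ∧ (∀ x, 0 < u x) ∧
      (∀ x, laplacian (laplacian u) x + (u x) ^ (-q) = 0) ∧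
      (¬ ∃ p : EuclideanSpace ℝ (Fin 3), ∀ x y, ‖x - p‖ = ‖y - p‖ → u x = u y) ∧
      liminf (fun x => u x / ‖x‖ ^ 2) (cocompact (EuclideanSpace ℝ (Fin 3))) = κ₁ ∧
      limsup (fun x => u x / ‖x‖ ^ 2) (cocompact (EuclideanSpace ℝ (Fin 3))) = κ₂ ∧
      Integrable (fun x => (u x) ^ (-q)) := by
  let e₀ : EuclideanSpace ℝ (Fin 3) := EuclideanSpace.single 0 1
  let e₁ : EuclideanSpace ℝ (Fin 3) := EuclideanSpace.single 1 1
  have he₀ : ‖e₀‖ = 1 := by simp [e₀]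
  have he₁ : ‖e₁‖ = 1 := by simp [e₁]
  let B := axialForm e₀ κ₁ κ₂
  have hB₀ : B e₀ e₀ = κ₁ := axialForm_apply_axis he₀
  have hB₁ : B e₁ e₁ = κ₂ := axialForm_apply_of_inner_eq_zero he₁
    ((EuclideanSpace.inner_single_left _ _ _).trans (by simp [e₁]))
  have hle := le_axialForm_apply_self (κ₁ := κ₁) (κ₂ := κ₂) he₀ hκ.le
  obtain ⟨N, u, hu, hpos, heq, hdist, hint⟩ :=
    exists_solution_abs_sub_le_norm (by simp) hκ₁ hle hq
  have ho : (fun x ↦ u x - B x x) =o[cocompact _] fun x ↦ ‖x‖ ^ 2 :=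
    isLittleO_norm_sq_of_abs_sub_le hdist
  refine ⟨u, hu, hpos, fun x ↦ ?_, ?_, ?_, ?_, hint⟩
  · simpa only [laplacian_eq_innerProductSpace_laplacian] using heq x
  · exact not_radial_of_isLittleO ho (e := e₀) (e' := e₁) (norm_ne_zero_iff.1 (by simp [he₀]))
      (he₀.trans he₁.symm) (by rw [hB₀, hB₁]; exact hκ.ne)
  · exact (liminf_div_norm_sq_eq ho he₀ (by rwa [hB₀])).trans hB₀
  · exact (limsup_div_norm_sq_eq ho he₁ (by
      rw [hB₁]
      exact axialForm_apply_self_le hκ.le)).trans hB₁
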